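/- arXiv:1510.07098 — 2 statements merged into one kernel-verified Lean document; each statement's English description precedes it below -/
import Mathlib

section
/- Let R be an associative unital ring and let ℰ be an exact structure on the category Mod R of right R-modules such that Mod R has enough ℰ-projectives and enough ℰ-injectives and ℰ contains all pure exact sequences. If 𝒴 is a class of pure injective right R-modules, then the class ^⊥𝒴 = {M : every conflation 0 → Y → Z → M → 0 with Y ∈ 𝒴 splits} is covering (every right R-module admits a ^⊥𝒴-cover) and is closed under pure quotients (if 0 → A → B → C → 0 is pure exact and B ∈ ^⊥𝒴, then C ∈ ^⊥𝒴). -/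
open CategoryTheory Category Limits

universe v u

namespace ExactPaper

variable {𝒜 : Type u} [Category.{v} 𝒜] [Abelian 𝒜]

/-- A morphism is an admissible monic w.r.t. a class `c` of short complexes if it occurs
as the first map of a member of `c`. -/
def AdmMono (c : ShortComplex 𝒜 → Prop) {X Y : 𝒜} (f : X ⟶ Y) : Prop :=
  ∃ (Z : 𝒜) (g : Y ⟶ Z) (w : f ≫ g = 0), c (ShortComplex.mk f g w)

/-- A morphism is an admissible epic w.r.t. a class `c` of short complexes if it occurs
as the second map of a member of `c`. -/
def AdmEpi (c : ShortComplex 𝒜 → Prop) {Y Z : 𝒜} (g : Y ⟶ Z) : Prop :=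
  ∃ (X : 𝒜) (f : X ⟶ Y) (w : f ≫ g = 0), c (ShortComplex.mk f g w)

/-- A (Quillen) exact structure on an abelian category `𝒜`: a class of short exact
sequences, called conflations, closed under isomorphisms, containing all split short
exact sequences, such that admissible monics and epics are closed under composition,
pushouts of admissible monics along arbitrary morphisms are admissible monics and
pullbacks of admissible epics along arbitrary morphisms are admissible epics. -/
structure ExactStructure (𝒜 : Type u) [Category.{v} 𝒜] [Abelian 𝒜] where
  conflation : ShortComplex 𝒜 → Prop
  shortExact_of_conflation : ∀ (S : ShortComplex 𝒜), conflation S → S.ShortExact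
  conflation_of_iso : ∀ (S T : ShortComplex 𝒜), (S ≅ T) → conflation S → conflation T
  conflation_of_splitting : ∀ (S : ShortComplex 𝒜), S.Splitting → conflation S
  admMono_comp : ∀ {X Y Z : 𝒜} (f : X ⟶ Y) (g : Y ⟶ Z),
    AdmMono conflation f → AdmMono conflation g → AdmMono conflation (f ≫ g)
  admEpi_comp : ∀ {X Y Z : 𝒜} (f : X ⟶ Y) (g : Y ⟶ Z),
    AdmEpi conflation f → AdmEpi conflation g → AdmEpi conflation (f ≫ g)
  admMono_pushout : ∀ {L M M' : 𝒜} (i : L ⟶ M) (f : L ⟶ M'),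
    AdmMono conflation i → AdmMono conflation (pushout.inr i f)
  admEpi_pullback : ∀ {M N M' : 𝒜} (p : M ⟶ N) (g : M' ⟶ N),
    AdmEpi conflation p → AdmEpi conflation (pullback.snd p g)

namespace ExactStructure

variable (E : ExactStructure 𝒜)

/-- An `ℰ`-projective object. -/
def EProjective (P : 𝒜) : Prop :=
  ∀ (S : ShortComplex 𝒜), E.conflation S → ∀ h : P ⟶ S.X₃, ∃ k : P ⟶ S.X₂, k ≫ S.g = h

/-- An `ℰ`-injective object. -/
def EInjective (I : 𝒜) : Prop :=
  ∀ (S : ShortComplex 𝒜), E.conflation S → ∀ h : S.X₁ ⟶ I, ∃ k : S.X₂ ⟶ I, S.f ≫ k = h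

/-- `𝒜` has enough `ℰ`-projectives. -/
def EnoughProjectives : Prop :=
  ∀ M : 𝒜, ∃ (K P : 𝒜) (i : K ⟶ P) (p : P ⟶ M) (w : i ≫ p = 0),
    E.conflation (ShortComplex.mk i p w) ∧ E.EProjective P

/-- `𝒜` has enough `ℰ`-injectives. -/
def EnoughInjectives : Prop :=
  ∀ M : 𝒜, ∃ (I C : 𝒜) (i : M ⟶ I) (p : I ⟶ C) (w : i ≫ p = 0),
    E.conflation (ShortComplex.mk i p w) ∧ E.EInjective I

/-- `Ext¹_ℰ(M,N) = 0`: every conflation `0 → N → Z → M → 0` splits. -/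
def Ext1Zero (M N : 𝒜) : Prop :=
  ∀ (Z : 𝒜) (i : N ⟶ Z) (p : Z ⟶ M) (w : i ≫ p = 0),
    E.conflation (ShortComplex.mk i p w) → ∃ r : Z ⟶ N, i ≫ r = 𝟙 N

/-- The right `ℰ`-orthogonal class `𝒳^⊥`. -/
def rightPerp (𝒳 : Set 𝒜) : Set 𝒜 := {N | ∀ X ∈ 𝒳, E.Ext1Zero X N}

/-- The left `ℰ`-orthogonal class `^⊥𝒴`. -/
def leftPerp (𝒴 : Set 𝒜) : Set 𝒜 := {M | ∀ Y ∈ 𝒴, E.Ext1Zero M Y}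

/-- A class is closed under `ℰ`-extensions. -/
def ClosedUnderExtensions (𝒯 : Set 𝒜) : Prop :=
  ∀ S : ShortComplex 𝒜, E.conflation S → S.X₁ ∈ 𝒯 → S.X₃ ∈ 𝒯 → S.X₂ ∈ 𝒯

/-- An `ℰ`-resolving class. -/
def Resolving (𝒯 : Set 𝒜) : Prop :=
  (∀ P : 𝒜, E.EProjective P → P ∈ 𝒯) ∧ E.ClosedUnderExtensions 𝒯 ∧
    ∀ S : ShortComplex 𝒜, E.conflation S → S.X₂ ∈ 𝒯 → S.X₃ ∈ 𝒯 → S.X₁ ∈ 𝒯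

/-- An `ℰ`-coresolving class. -/
def Coresolving (𝒯 : Set 𝒜) : Prop :=
  (∀ I : 𝒜, E.EInjective I → I ∈ 𝒯) ∧ E.ClosedUnderExtensions 𝒯 ∧
    ∀ S : ShortComplex 𝒜, E.conflation S → S.X₁ ∈ 𝒯 → S.X₂ ∈ 𝒯 → S.X₃ ∈ 𝒯

/-- `(𝒳,𝒴)` is a complete hereditary `ℰ`-cotorsion pair. -/
def CompleteHereditaryCotorsionPair (𝒳 𝒴 : Set 𝒜) : Prop :=
  𝒳 = E.leftPerp 𝒴 ∧ 𝒴 = E.rightPerp 𝒳 ∧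
  (∀ A : 𝒜, ∃ (Y X : 𝒜) (i : Y ⟶ X) (p : X ⟶ A) (w : i ≫ p = 0),
      E.conflation (ShortComplex.mk i p w) ∧ X ∈ 𝒳 ∧ Y ∈ 𝒴) ∧
  (∀ A : 𝒜, ∃ (Y' X' : 𝒜) (i : A ⟶ Y') (p : Y' ⟶ X') (w : i ≫ p = 0),
      E.conflation (ShortComplex.mk i p w) ∧ X' ∈ 𝒳 ∧ Y' ∈ 𝒴) ∧
  E.Resolving 𝒳

end ExactStructure

/-- `f : X ⟶ A` is an `𝒳`-precover of `A`. -/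
def IsPrecover (𝒳 : Set 𝒜) {X A : 𝒜} (f : X ⟶ A) : Prop :=
  X ∈ 𝒳 ∧ ∀ X' : 𝒜, X' ∈ 𝒳 → ∀ g : X' ⟶ A, ∃ h : X' ⟶ X, h ≫ f = g

/-- `f : X ⟶ A` is an `𝒳`-cover of `A`. -/
def IsCover (𝒳 : Set 𝒜) {X A : 𝒜} (f : X ⟶ A) : Prop :=
  IsPrecover 𝒳 f ∧ ∀ h : X ⟶ X, h ≫ f = f → IsIso h

/-- `f : A ⟶ Y` is a `𝒴`-preenvelope of `A`. -/
def IsPreenvelope (𝒴 : Set 𝒜) {A Y : 𝒜} (f : A ⟶ Y) : Prop :=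
  Y ∈ 𝒴 ∧ ∀ Y' : 𝒜, Y' ∈ 𝒴 → ∀ g : A ⟶ Y', ∃ h : Y ⟶ Y', f ≫ h = g

/-- `f : A ⟶ Y` is a `𝒴`-envelope of `A`. -/
def IsEnvelope (𝒴 : Set 𝒜) {A Y : 𝒜} (f : A ⟶ Y) : Prop :=
  IsPreenvelope 𝒴 f ∧ ∀ h : Y ⟶ Y, f ≫ h = f → IsIso h

/-- A class of objects closed under isomorphisms. -/
def ClosedUnderIsos (𝒳 : Set 𝒜) : Prop := ∀ X Y : 𝒜, (X ≅ Y) → X ∈ 𝒳 → Y ∈ 𝒳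

/-- A class of objects closed under direct summands. -/
def ClosedUnderDirectSummands (𝒳 : Set 𝒜) : Prop :=
  ∀ X Y : 𝒜, (∃ (s : Y ⟶ X) (r : X ⟶ Y), s ≫ r = 𝟙 Y) → X ∈ 𝒳 → Y ∈ 𝒳

end ExactPaper

namespace ExactPaper

open CategoryTheory Limits

variable {R : Type u} [Ring R]

/-- A pure exact sequence of right `R`-modules (i.e. of `Rᵐᵒᵖ`-modules): a short exact
sequence which stays exact after applying `Hom_R(F, −)` for every finitely presented
right `R`-module `F`. -/
def PureSES (S : ShortComplex (ModuleCat.{u} Rᵐᵒᵖ)) : Prop :=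
  S.ShortExact ∧ ∀ F : ModuleCat.{u} Rᵐᵒᵖ, Module.FinitePresentation Rᵐᵒᵖ F →
    ∀ h : F ⟶ S.X₃, ∃ k : F ⟶ S.X₂, k ≫ S.g = h

/-- A pure projective right `R`-module: projective with respect to pure exact sequences. -/
def PureProjective (P : ModuleCat.{u} Rᵐᵒᵖ) : Prop :=
  ∀ S : ShortComplex (ModuleCat.{u} Rᵐᵒᵖ), PureSES S →
    ∀ h : P ⟶ S.X₃, ∃ k : P ⟶ S.X₂, k ≫ S.g = h

/-- A pure injective right `R`-module: injective with respect to pure exact sequences. -/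
def PureInjective (I : ModuleCat.{u} Rᵐᵒᵖ) : Prop :=
  ∀ S : ShortComplex (ModuleCat.{u} Rᵐᵒᵖ), PureSES S →
    ∀ h : S.X₁ ⟶ I, ∃ k : S.X₂ ⟶ I, S.f ≫ k = h

end ExactPaper

/-!
A module `M` lies in `^⊥𝒴` iff every map out of `M` lifts along the conflations with kernel in
`𝒴`. Hence `^⊥𝒴` is closed under coproducts, and pure injectivity of the members of `𝒴` makes it
closed under pure quotients.

A class `𝒳` of modules with these two closure properties is covering. Dividing `X` by a maximal
pure submodule of the kernel of `X → A` factors this map through a pure quotient of `X` whose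
cardinality is bounded in terms of `R` and `A`; the coproduct of all maps to `A` from small members
of `𝒳` is therefore an `𝒳`-precover. A filtered colimit of modules is a pure quotient of the
coproduct of its terms, so `𝒳` is also closed under filtered colimits, and the transfinite
chain argument of Enochs upgrades a precover to a cover.
-/

namespace ExactPaper

section Purity

variable {R : Type*} [Ring R] {X Y Z M : Type*} [AddCommGroup X] [Module R X]
  [AddCommGroup Y] [Module R Y] [AddCommGroup Z] [Module R Z] [AddCommGroup M] [Module R M]

/-- Purity of a submodule in terms of linear systems: a finite system with constants in `P` that
is solvable in `X` is solvable in `P`. The linear map `a` is the coefficient matrix, and an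
`n`-tuple of elements of `X` is a linear map from `Fin n → R`. -/
def IsPure (P : Submodule R X) : Prop :=
  ∀ ⦃m n : ℕ⦄ (a : (Fin m → R) →ₗ[R] Fin n → R) (x : (Fin n → R) →ₗ[R] X),
    (∀ v, x (a v) ∈ P) → ∃ y : (Fin n → R) →ₗ[R] X, (∀ v, y v ∈ P) ∧ y ∘ₗ a = x ∘ₗ a

/-- A pure epimorphism: solutions of finite homogeneous linear systems lift along `σ`, in the
encoding of `IsPure`. -/
def IsPureEpi (σ : X →ₗ[R] Z) : Prop :=
  ∀ ⦃m n : ℕ⦄ (a : (Fin m → R) →ₗ[R] Fin n → R) (z : (Fin n → R) →ₗ[R] Z),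
    z ∘ₗ a = 0 → ∃ x : (Fin n → R) →ₗ[R] X, x ∘ₗ a = 0 ∧ σ ∘ₗ x = z

theorem exists_comp_eq_of_range_le [Module.Projective R Y] (g : X →ₗ[R] Z) (f : Y →ₗ[R] Z)
    (h : ∀ y, f y ∈ LinearMap.range g) : ∃ k : Y →ₗ[R] X, g ∘ₗ k = f := by
  obtain ⟨k, hk⟩ := Module.projective_lifting_property g.rangeRestrict (f.codRestrict _ h)
    g.surjective_rangeRestrict
  exact ⟨k, LinearMap.ext fun y => congrArg Subtype.val (LinearMap.congr_fun hk y)⟩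

theorem isPure_bot : IsPure (⊥ : Submodule R X) := fun _ _ _ _ hx =>
  ⟨0, fun _ => Submodule.zero_mem _, LinearMap.ext fun v => ((Submodule.mem_bot R).1 (hx v)).symm⟩

theorem isPure_sSup {c : Set (Submodule R X)} (hc : ∀ P ∈ c, IsPure P) (hne : c.Nonempty)
    (hdir : DirectedOn (· ≤ ·) c) : IsPure (sSup c) := by
  intro m n a x hx
  have hcompact : IsCompactElement (LinearMap.range (x ∘ₗ a)) := by
    rw [← Submodule.fg_iff_compact, LinearMap.range_eq_map]
    exact Module.Finite.fg_top.map _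
  obtain ⟨P, hPc, hP⟩ :=
    (CompleteLattice.isCompactElement_iff_le_of_directed_sSup_le _ _).1 hcompact c hne hdir
      (LinearMap.range_le_iff_comap.2 (eq_top_iff.2 fun v _ => hx v))
  obtain ⟨y, hyP, hy⟩ := hc P hPc a x fun v => hP ⟨v, rfl⟩
  exact ⟨y, fun v => le_sSup hPc (hyP v), hy⟩

theorem IsPure.isPureEpi_mkQ {P : Submodule R X} (hP : IsPure P) : IsPureEpi P.mkQ := by
  intro m n a z hz
  obtain ⟨x, hx⟩ := Module.projective_lifting_property P.mkQ z P.mkQ_surjective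
  obtain ⟨y, hyP, hy⟩ := hP a x fun v => by
    rw [← Submodule.ker_mkQ P, LinearMap.mem_ker, ← LinearMap.comp_apply, hx,
      ← LinearMap.comp_apply, hz, LinearMap.zero_apply]
  refine ⟨x - y, by rw [LinearMap.sub_comp, hy, sub_self], ?_⟩
  have hy0 : P.mkQ ∘ₗ y = 0 := LinearMap.ext fun v => (Submodule.Quotient.mk_eq_zero P).2 (hyP v)
  rw [LinearMap.comp_sub, hx, hy0, sub_zero]

theorem IsPure.comap_mkQ {P : Submodule R X} (hP : IsPure P) {Q : Submodule R (X ⧸ P)}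
    (hQ : IsPure Q) : IsPure (Q.comap P.mkQ) := by
  intro m n a x hx
  obtain ⟨z, hzQ, hz⟩ := hQ a (P.mkQ ∘ₗ x) hx
  obtain ⟨y, hy, hyz⟩ := hP.isPureEpi_mkQ a (P.mkQ ∘ₗ x - z) (by
    rw [LinearMap.sub_comp, hz, sub_self])
  refine ⟨x - y, fun v => ?_, by rw [LinearMap.sub_comp, hy, sub_zero]⟩
  have hxy : P.mkQ ∘ₗ (x - y) = z := by rw [LinearMap.comp_sub, hyz, sub_sub_cancel]
  rw [Submodule.mem_comap, ← LinearMap.comp_apply, hxy]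
  exact hzQ v

theorem exists_maximal_isPure_le (N : Submodule R X) :
    ∃ P : Submodule R X, Maximal (fun P => IsPure P ∧ P ≤ N) P := by
  obtain ⟨P, -, hP⟩ := zorn_le_nonempty₀ {P : Submodule R X | IsPure P ∧ P ≤ N}
    (fun c hc hchain Q hQ => ⟨sSup c,
      ⟨isPure_sSup (fun P hP => (hc hP).1) ⟨Q, hQ⟩ hchain.directedOn,
        sSup_le fun P hP => (hc hP).2⟩,
      fun P hP => le_sSup hP⟩)
    ⊥ ⟨isPure_bot, bot_le⟩
  exact ⟨P, hP⟩

theorem eq_bot_of_maximal_isPure {N P : Submodule R X}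
    (hP : Maximal (fun P => IsPure P ∧ P ≤ N) P)
    {Q : Submodule R (X ⧸ P)} (hQ : IsPure Q) (hQN : Q.comap P.mkQ ≤ N) : Q = ⊥ := by
  have hle : Q.comap P.mkQ ≤ P :=
    hP.le_of_ge ⟨hP.prop.1.comap_mkQ hQ, hQN⟩ (Submodule.le_comap_mkQ P Q)
  rw [← Submodule.map_comap_eq_of_surjective P.mkQ_surjective Q, eq_bot_iff,
    Submodule.map_le_iff_le_comap, Submodule.comap_bot, Submodule.ker_mkQ]
  exact hle

theorem IsPureEpi.surjective {σ : X →ₗ[R] Z} (hσ : IsPureEpi σ) : Function.Surjective σ := by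
  intro z
  obtain ⟨x, -, hx⟩ := hσ (0 : (Fin 0 → R) →ₗ[R] Fin 1 → R)
    (Fintype.linearCombination R fun _ => z) (LinearMap.comp_zero _)
  refine ⟨x (Pi.single 0 1), ?_⟩
  rw [← LinearMap.comp_apply, hx, Fintype.linearCombination_apply_single, one_smul]

theorem IsPureEpi.equiv_comp {σ : X →ₗ[R] Z} (hσ : IsPureEpi σ) (e : Z ≃ₗ[R] Y) :
    IsPureEpi (e.toLinearMap ∘ₗ σ) := by
  intro m n a z hz
  obtain ⟨x, hxa, hx⟩ := hσ a (e.symm.toLinearMap ∘ₗ z) (by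
    rw [LinearMap.comp_assoc, hz, LinearMap.comp_zero])
  exact ⟨x, hxa, by rw [LinearMap.comp_assoc, hx, ← LinearMap.comp_assoc, e.comp_symm,
    LinearMap.id_comp]⟩

theorem IsPureEpi.exists_lift {σ : X →ₗ[R] Z} (hσ : IsPureEpi σ) [Module.FinitePresentation R M]
    (h : M →ₗ[R] Z) : ∃ k : M →ₗ[R] X, σ ∘ₗ k = h := by
  obtain ⟨n, K, e, hK⟩ := Module.FinitePresentation.exists_fin R M
  obtain ⟨m, b, hb⟩ := Submodule.fg_iff_exists_fin_generating_family.1 hK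
  have hrange : LinearMap.range (Fintype.linearCombination R b) = K := by
    rw [Fintype.range_linearCombination, hb]
  let π : (Fin n → R) →ₗ[R] M := e.symm.toLinearMap ∘ₗ K.mkQ
  have hπ : π ∘ₗ Fintype.linearCombination R b = 0 := by
    rw [← LinearMap.range_le_ker_iff, hrange, LinearEquiv.ker_comp, Submodule.ker_mkQ]
  obtain ⟨x, hx, hσx⟩ := hσ (Fintype.linearCombination R b) (h ∘ₗ π) (by
    rw [LinearMap.comp_assoc, hπ, LinearMap.comp_zero])
  have hKx : K ≤ LinearMap.ker x := hrange ▸ LinearMap.range_le_ker_iff.2 hx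
  have hπsurj : Function.Surjective π := e.symm.surjective.comp K.mkQ_surjective
  refine ⟨K.liftQ x hKx ∘ₗ e.toLinearMap, (LinearMap.cancel_right hπsurj).1 (Eq.trans ?_ hσx)⟩
  ext v
  simp [π]

end Purity

section Bounding

variable {R : Type u} [Ring R]

section PureHull

/-- Names for the elements of the smallest submodule that contains a given element and is closed
under a choice of solutions of finite linear systems. -/
inductive PureHullTerm (R : Type u) [Ring R] : Type u
  | base : PureHullTerm R
  | add : PureHullTerm R → PureHullTerm R → PureHullTerm R
  | smul : R → PureHullTerm R → PureHullTerm R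
  | solution {m n : ℕ} (a : (Fin m → R) →ₗ[R] Fin n → R) (t : Fin m → PureHullTerm R) (i : Fin n) :
      PureHullTerm R

variable {X : Type*} [AddCommGroup X] [Module R X]

/-- The element of `X` named by a term, when `base` names `x` and `solution a t` names the tuple
picked by `Classical.epsilon` among the solutions of the system `a` with constants `t`. -/
noncomputable def PureHullTerm.eval (x : X) : PureHullTerm R → X
  | base => x
  | add s t => s.eval x + t.eval x
  | smul r t => r • t.eval x
  | solution a t i =>
      Classical.epsilon (fun y : (Fin _ → R) →ₗ[R] X =>
        y ∘ₗ a = Fintype.linearCombination R fun j => (t j).eval x) (Pi.single i 1)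

theorem PureHullTerm.exists_eval_eq_linearCombination (x : X) (b : PureHullTerm R →₀ R) :
    ∃ t : PureHullTerm R, t.eval x = Finsupp.linearCombination R (eval x) b := by
  induction b using Finsupp.induction_linear with
  | zero => exact ⟨.smul 0 .base, by simp [eval]⟩
  | add b c hb hc =>
    obtain ⟨s, hs⟩ := hb
    obtain ⟨t, ht⟩ := hc
    exact ⟨.add s t, by simp [eval, hs, ht]⟩
  | single t r => exact ⟨.smul r t, by simp [eval]⟩

theorem PureHullTerm.isPure_range_linearCombination (x : X) :
    IsPure (LinearMap.range (Finsupp.linearCombination R (eval (R := R) x))) := by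
  intro m n a y hy
  have hterm (v : Fin m → R) : ∃ t : PureHullTerm R, t.eval x = y (a v) := by
    obtain ⟨b, hb⟩ := hy v
    rw [← hb]
    exact exists_eval_eq_linearCombination x b
  choose t ht using fun j : Fin m => hterm (Pi.single j 1)
  have hsolvable : y ∘ₗ a = Fintype.linearCombination R fun j => (t j).eval x :=
    LinearMap.pi_ext' fun j => LinearMap.ext_ring (by simp [ht])
  let z : (Fin n → R) →ₗ[R] X := Classical.epsilon fun z => z ∘ₗ a =
    Fintype.linearCombination R fun j => (t j).eval x
  have hz : z ∘ₗ a = Fintype.linearCombination R fun j => (t j).eval x :=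
    Classical.epsilon_spec (p := fun z : (Fin n → R) →ₗ[R] X => z ∘ₗ a = _) ⟨y, hsolvable⟩
  refine ⟨z, fun v => ?_, hz.trans hsolvable.symm⟩
  rw [pi_eq_sum_univ' v, map_sum]
  refine Submodule.sum_mem _ fun i _ => ?_
  rw [map_smul]
  exact Submodule.smul_mem _ _ ⟨Finsupp.single (.solution a t i) 1, by simp [eval, z]⟩

end PureHull

section Bound

variable {F M : Type u} [AddCommGroup F] [Module R F] [AddCommGroup M] [Module R M]

/-- Names for the elements of the smallest submodule of `X` that is closed under a choice of
extensions of partial lifts: `extension D g t` names a linear map `F → X` lifting `g` along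
`f : X → M` and prescribed on `D` by the terms `t`. -/
inductive LiftTerm (R : Type u) [Ring R] (F M : Type u) [AddCommGroup F] [Module R F]
    [AddCommGroup M] [Module R M] : Type u
  | zero : LiftTerm R F M
  | add : LiftTerm R F M → LiftTerm R F M → LiftTerm R F M
  | smul : R → LiftTerm R F M → LiftTerm R F M
  | extension (D : Submodule R F) (g : F →ₗ[R] M) (t : D → LiftTerm R F M) (b : F) :
      LiftTerm R F M

variable {X : Type*} [AddCommGroup X] [Module R X]

/-- The element of `X` named by a term, the extensions being picked by `Classical.epsilon`. -/
noncomputable def LiftTerm.eval (f : X →ₗ[R] M) : LiftTerm R F M → X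
  | zero => 0
  | add s t => s.eval f + t.eval f
  | smul r t => r • t.eval f
  | extension D g t b =>
      Classical.epsilon (fun L : F →ₗ[R] X => (∀ d : D, L d = (t d).eval f) ∧ f ∘ₗ L = g) b

/-- The submodule of all elements named by terms. -/
noncomputable def LiftTerm.evalRange (F : Type u) [AddCommGroup F] [Module R F] (f : X →ₗ[R] M) :
    Submodule R X where
  carrier := Set.range (eval (F := F) f)
  zero_mem' := ⟨.zero, rfl⟩
  add_mem' := by
    rintro _ _ ⟨s, rfl⟩ ⟨t, rfl⟩
    exact ⟨.add s t, rfl⟩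
  smul_mem' := by
    rintro r _ ⟨t, rfl⟩
    exact ⟨.smul r t, rfl⟩

theorem LiftTerm.exists_mem_evalRange_comp_eq (f : X →ₗ[R] M) (L : F →ₗ[R] X) :
    ∃ L' : F →ₗ[R] X, (∀ b, L' b ∈ evalRange F f) ∧ (∀ b, L b ∈ evalRange F f → L' b = L b) ∧
      f ∘ₗ L' = f ∘ₗ L := by
  choose t ht using fun d : (evalRange F f).comap L => d.2
  have hspec := Classical.epsilon_spec
    (p := fun L' : F →ₗ[R] X =>
      (∀ d : (evalRange F f).comap L, L' d = (t d).eval f) ∧ f ∘ₗ L' = f ∘ₗ L)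
    ⟨L, fun d => (ht d).symm, rfl⟩
  exact ⟨_, fun b => ⟨.extension _ (f ∘ₗ L) t b, rfl⟩,
    fun b hb => (hspec.1 ⟨b, hb⟩).trans (ht ⟨b, hb⟩), hspec.2⟩

end Bound

theorem isPure_range_sub {F X Q : Type*} [AddCommGroup F] [Module R F] [AddCommGroup X]
    [Module R X] [AddCommGroup Q] [Module R Q] {q : X →ₗ[R] Q} {L L' : F →ₗ[R] X}
    (hpure : IsPure (LinearMap.range (q ∘ₗ L))) (hqL' : q ∘ₗ L' = 0)
    (hL' : ∀ b, q (L b) = 0 → L' b = L b) : IsPure (LinearMap.range (L - L')) := by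
  intro m n a x hx
  have hqL : q ∘ₗ (L - L') = q ∘ₗ L := by rw [LinearMap.comp_sub, hqL', sub_zero]
  obtain ⟨b, hb⟩ := exists_comp_eq_of_range_le (L - L') (x ∘ₗ a) hx
  obtain ⟨y, hyrange, hy⟩ := hpure a (q ∘ₗ x) fun v => by
    obtain ⟨c, hc⟩ := hx v
    exact ⟨c, by rw [← hqL, LinearMap.comp_apply, hc, LinearMap.comp_apply]⟩
  obtain ⟨c, hc⟩ := exists_comp_eq_of_range_le (q ∘ₗ L) y hyrange
  refine ⟨(L - L') ∘ₗ c, fun v => ⟨c v, rfl⟩, ?_⟩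
  have hker : (q ∘ₗ L) ∘ₗ (c ∘ₗ a - b) = 0 := by
    rw [LinearMap.comp_sub, ← LinearMap.comp_assoc, hc, hy, ← hqL, LinearMap.comp_assoc,
      LinearMap.comp_assoc, hb, sub_self]
  rw [← hb, LinearMap.comp_assoc, ← sub_eq_zero, ← LinearMap.comp_sub]
  exact LinearMap.ext fun v => sub_eq_zero.2 (hL' _ (LinearMap.congr_fun hker v)).symm

theorem LiftTerm.evalRange_eq_top {M : Type u} {X : Type*} [AddCommGroup X] [Module R X]
    [AddCommGroup M] [Module R M] {f : X →ₗ[R] M}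
    (hf : ∀ P : Submodule R X, IsPure P → P ≤ LinearMap.ker f → P = ⊥) :
    evalRange (PureHullTerm R →₀ R) f = ⊤ := by
  refine eq_top_iff.2 fun x _ => ?_
  let N := evalRange (PureHullTerm R →₀ R) f
  let φ := Finsupp.linearCombination R (PureHullTerm.eval (R := R) (N.mkQ x))
  -- A lift `L` to `X` of the small pure submodule of `X ⧸ N` around `x` has a twin with values in
  -- `N`; their differences form a pure submodule of `ker f`, so they agree and `x` lies in `N`.
  obtain ⟨L, hL⟩ := Module.projective_lifting_property N.mkQ φ N.mkQ_surjective
  obtain ⟨L', hL'N, hL'L, hfL'⟩ := exists_mem_evalRange_comp_eq f L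
  have hpure : IsPure (LinearMap.range (L - L')) :=
    isPure_range_sub (q := N.mkQ) (hL ▸ PureHullTerm.isPure_range_linearCombination _)
      (LinearMap.ext fun b => (Submodule.Quotient.mk_eq_zero N).2 (hL'N b))
      fun b hb => hL'L b ((Submodule.Quotient.mk_eq_zero N).1 hb)
  have hLL' : L = L' := by
    rw [← sub_eq_zero, ← LinearMap.range_eq_bot]
    refine hf _ hpure (LinearMap.range_le_ker_iff.2 ?_)
    rw [LinearMap.comp_sub, hfL', sub_self]
  have hbase : N.mkQ (L (Finsupp.single .base 1)) = N.mkQ x := by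
    rw [← LinearMap.comp_apply, hL]
    simp [φ, PureHullTerm.eval]
  rw [hLL'] at hbase
  exact (Submodule.Quotient.mk_eq_zero N).1
    (hbase.symm.trans ((Submodule.Quotient.mk_eq_zero N).2 (hL'N _)))

theorem exists_isPureEpi_quotient_factorization (M : Type u) [AddCommGroup M] [Module R M] :
    ∃ (F : Type u) (_ : AddCommGroup F) (_ : Module R F),
      ∀ {X : Type u} [AddCommGroup X] [Module R X] (f : X →ₗ[R] M),
        ∃ (K : Submodule R F) (σ : X →ₗ[R] F ⧸ K) (g : F ⧸ K →ₗ[R] M),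
          IsPureEpi σ ∧ g ∘ₗ σ = f := by
  refine ⟨LiftTerm R (PureHullTerm R →₀ R) M →₀ R, inferInstance, inferInstance, fun f => ?_⟩
  obtain ⟨P, hP⟩ := exists_maximal_isPure_le (LinearMap.ker f)
  let f' := P.liftQ f hP.prop.2
  have hf' : LiftTerm.evalRange (PureHullTerm R →₀ R) f' = ⊤ :=
    LiftTerm.evalRange_eq_top fun Q hQ hQf' => eq_bot_of_maximal_isPure hP hQ fun x hx => hQf' hx
  let π := Finsupp.linearCombination R (LiftTerm.eval (F := PureHullTerm R →₀ R) f')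
  have hπ : Function.Surjective π := fun x => by
    obtain ⟨t, rfl⟩ := (hf' ▸ Submodule.mem_top : x ∈ LiftTerm.evalRange _ f')
    exact ⟨Finsupp.single t 1, by simp [π]⟩
  let e := π.quotKerEquivOfSurjective hπ
  refine ⟨LinearMap.ker π, e.symm.toLinearMap ∘ₗ P.mkQ, f' ∘ₗ e.toLinearMap,
    hP.prop.1.isPureEpi_mkQ.equiv_comp e.symm, ?_⟩
  ext x
  simp [f']

end Bounding

section WellOrderedChains

theorem exists_forall_map_eq_of_map_eq {J : Type u} [LinearOrder J] (G : J ⥤ Type u)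
    {κ : Cardinal.{u}} [Fact κ.IsRegular] [IsCardinalFiltered J κ] {i : J}
    (hi : Cardinal.mk (G.obj i) < κ) :
    ∃ (k : J) (hik : i ≤ k), ∀ (l : J) (hil : i ≤ l) (x y : G.obj i),
      G.map (homOfLE hil) x = G.map (homOfLE hil) y →
        G.map (homOfLE hik) x = G.map (homOfLE hik) y := by
  have hpair (p : G.obj i × G.obj i) : ∃ (k : J) (hik : i ≤ k), ∀ (l : J) (hil : i ≤ l),
      G.map (homOfLE hil) p.1 = G.map (homOfLE hil) p.2 →
        G.map (homOfLE hik) p.1 = G.map (homOfLE hik) p.2 := by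
    by_cases h : ∃ (k : J) (hik : i ≤ k), G.map (homOfLE hik) p.1 = G.map (homOfLE hik) p.2
    · obtain ⟨k, hik, hk⟩ := h
      exact ⟨k, hik, fun _ _ _ => hk⟩
    · exact ⟨i, le_rfl, fun l hil hl => absurd ⟨l, hil, hl⟩ h⟩
  choose k hik hk using hpair
  have hcard : HasCardinalLT (G.obj i × G.obj i) κ := by
    rw [hasCardinalLT_iff_cardinal_mk_lt, Cardinal.mk_prod, Cardinal.lift_id]
    exact Cardinal.mul_lt_of_lt (Fact.out : κ.IsRegular).aleph0_le hi hi
  have hle (p : G.obj i × G.obj i) : k p ≤ max (IsCardinalFiltered.max k hcard) i :=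
    (leOfHom (IsCardinalFiltered.toMax k hcard p)).trans (le_max_left _ _)
  refine ⟨max (IsCardinalFiltered.max k hcard) i, le_max_right _ _, fun l hil x y hxy => ?_⟩
  rw [← homOfLE_comp (hik (x, y)) (hle (x, y)), Functor.map_comp, ConcreteCategory.comp_apply,
    ConcreteCategory.comp_apply, hk (x, y) l hil hxy]

theorem exists_isSuccLimit_forall_exists_le {J : Type u} [LinearOrder J] [WellFoundedLT J]
    [Nonempty J] {κ : Cardinal.{u}} [Fact κ.IsRegular] [IsCardinalFiltered J κ]
    (hκ : Cardinal.aleph0 < κ) {s : J → J} (hs : ∀ i, i < s i) :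
    ∃ j, Order.IsSuccLimit j ∧ ∀ i < j, ∃ k, i ≤ k ∧ s k ≤ j := by
  let p (n : ℕ) : J := s^[n] (Classical.arbitrary J)
  have hp (n : ℕ) : p (n + 1) = s (p n) := Function.iterate_succ_apply' s n _
  have hcard : HasCardinalLT (ULift.{u} ℕ) κ := by
    simpa [hasCardinalLT_iff_cardinal_mk_lt] using hκ
  have hbdd : (upperBounds (Set.range p)).Nonempty := by
    refine ⟨IsCardinalFiltered.max (fun n : ULift ℕ => p n.down) hcard, ?_⟩
    rintro _ ⟨n, rfl⟩
    exact leOfHom (IsCardinalFiltered.toMax (fun n : ULift ℕ => p n.down) hcard ⟨n⟩)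
  obtain ⟨j, hj⟩ : ∃ j, IsLUB (Set.range p) j :=
    ⟨_, WellFounded.min_mem wellFounded_lt _ hbdd, fun b hb => WellFounded.min_le _ hb⟩
  have hle (n : ℕ) : s (p n) ≤ j := hp n ▸ hj.1 ⟨n + 1, rfl⟩
  refine ⟨j, hj.isSuccLimit_of_notMem (Set.range_nonempty p) ?_, fun i hi => ?_⟩
  · rintro ⟨n, rfl⟩
    exact (hs (p n)).not_ge (hle n)
  · obtain ⟨_, ⟨n, rfl⟩, hn⟩ := (lt_isLUB_iff hj).1 hi
    exact ⟨p n, hn.le, hle n⟩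

variable {J : Type u} [LinearOrder J] [SuccOrder J]

theorem exists_forall_injective_map [WellFoundedLT J] [Nonempty J] [NoMaxOrder J]
    {κ : Cardinal.{u}} [Fact κ.IsRegular] [IsCardinalFiltered J κ] (hκ : Cardinal.aleph0 < κ)
    (G : J ⥤ Type u) [G.IsWellOrderContinuous]
    (hG : ∀ i, Cardinal.mk (G.obj (Order.succ i)) < κ) :
    ∃ j, ∀ (l : J) (hjl : j ≤ l), Function.Injective (G.map (homOfLE hjl)) := by
  choose s hs hsG using fun i => exists_forall_map_eq_of_map_eq G (hG i)
  obtain ⟨j, hjlim, hj⟩ := exists_isSuccLimit_forall_exists_le hκ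
    fun i => (Order.lt_succ i).trans_le (hs i)
  have hrep (x : G.obj j) :
      ∃ (i : J) (hij : i < j) (x' : G.obj i), G.map (homOfLE hij.le) x' = x := by
    obtain ⟨⟨i, hij⟩, x', hx'⟩ :=
      Types.jointly_surjective_of_isColimit (G.isColimitOfIsWellOrderContinuous j hjlim) x
    exact ⟨i, hij, x', hx'⟩
  refine ⟨j, fun l hjl x y hxy => ?_⟩
  obtain ⟨a, haj, x, rfl⟩ := hrep x
  obtain ⟨b, hbj, y, rfl⟩ := hrep y
  obtain ⟨k, hk, hkj⟩ := hj _ (max_lt haj hbj)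
  have hak : a ≤ Order.succ k := ((le_max_left a b).trans hk).trans (Order.le_succ k)
  have hbk : b ≤ Order.succ k := ((le_max_right a b).trans hk).trans (Order.le_succ k)
  have hsk := hsG k l ((hs k).trans (hkj.trans hjl)) (G.map (homOfLE hak) x) (G.map (homOfLE hbk) y)
  simp only [← ConcreteCategory.comp_apply, ← Functor.map_comp, homOfLE_comp] at hxy hsk ⊢
  rw [← homOfLE_comp (hak.trans (hs k)) hkj, ← homOfLE_comp (hbk.trans (hs k)) hkj,
    Functor.map_comp, Functor.map_comp, ConcreteCategory.comp_apply, ConcreteCategory.comp_apply,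
    hsk hxy]

theorem exists_surjective_map_succ {G : J ⥤ Type u} (c : Cocone G)
    (hc : ∀ j, Function.Injective (c.ι.app (Order.succ j)))
    (hcard : Cardinal.mk c.pt < Cardinal.mk J) :
    ∃ j, Function.Surjective (G.map (homOfLE (Order.le_succ (Order.succ j)))) := by
  by_contra! hcon
  simp only [Function.Surjective, not_forall, not_exists] at hcon
  choose e he using hcon
  have hw {i j : J} (hij : i ≤ j) (x : G.obj i) :
      c.ι.app j (G.map (homOfLE hij) x) = c.ι.app i x := by
    rw [← ConcreteCategory.comp_apply, c.w]
  let φ (j : J) : c.pt := c.ι.app (Order.succ (Order.succ j)) (e j)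
  have hφ {i j : J} (hij : i < j) : φ i ≠ φ j := by
    intro heq
    have hle : Order.succ (Order.succ i) ≤ Order.succ j :=
      Order.succ_le_succ (Order.succ_le_of_lt hij)
    simp only [φ] at heq
    rw [← hw hle, ← hw (Order.le_succ (Order.succ j))] at heq
    exact he j _ (hc _ heq)
  have hφinj : Function.Injective φ := .of_lt_imp_ne fun _ _ => hφ
  exact (Cardinal.mk_le_of_injective hφinj).not_gt hcard

theorem exists_regular_wellOrder (α : Type u) : ∃ (κ : Cardinal.{u}) (_ : Fact κ.IsRegular)
    (J : Type u) (_ : LinearOrder J) (_ : SuccOrder J) (_ : OrderBot J) (_ : WellFoundedLT J)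
    (_ : NoMaxOrder J) (_ : IsCardinalFiltered J κ),
    Cardinal.aleph0 < κ ∧ Cardinal.mk α < κ ∧ Cardinal.mk J = κ := by
  let κ : Cardinal.{u} := Order.succ (max (Cardinal.mk α) Cardinal.aleph0)
  have hκ : κ.IsRegular := Cardinal.isRegular_succ (le_max_right _ _)
  have : Fact κ.IsRegular := ⟨hκ⟩
  have : Nonempty κ.ord.ToType := IsCardinalFiltered.nonempty κ.ord.ToType κ
  exact ⟨κ, ‹_›, κ.ord.ToType, inferInstance, SuccOrder.ofLinearWellFoundedLT _,
    WellFoundedLT.toOrderBot _, inferInstance, Cardinal.noMaxOrder hκ.aleph0_le, inferInstance,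
    Order.lt_succ_of_le (le_max_right _ _), Order.lt_succ_of_le (le_max_left _ _), by simp⟩

end WellOrderedChains

section WeaklyTerminal

variable {C : Type*} [Category* C]

/-- A weakly terminal object: every object maps to it, not necessarily uniquely. -/
def IsWeaklyTerminal (X : C) : Prop := ∀ Y : C, Nonempty (Y ⟶ X)

/-- `X` is rigid if every morphism out of `X` is injective on underlying sets, as measured by the
functor `V`. -/
def IsRigid (V : C ⥤ Type u) (X : C) : Prop :=
  ∀ ⦃Z : C⦄ (g : X ⟶ Z), Function.Injective (V.map g)

variable {V : C ⥤ Type u}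

theorem IsWeaklyTerminal.of_hom {X Y : C} (hX : IsWeaklyTerminal X) (f : X ⟶ Y) :
    IsWeaklyTerminal Y := fun Z => (hX Z).map (· ≫ f)

theorem IsRigid.of_iso {X Y : C} (hX : IsRigid V X) (e : X ≅ Y) : IsRigid V Y := by
  intro Z g
  have hg : V.map g = V.map e.inv ≫ V.map (e.hom ≫ g) := by rw [← V.map_comp, e.inv_hom_id_assoc]
  have he : Function.Injective (V.map e.inv) := (ConcreteCategory.bijective_of_isIso _).1
  rw [hg, ConcreteCategory.coe_comp]
  exact (hX _).comp he

theorem exists_hom_isRigid_of_injective {T : C} (hT : IsWeaklyTerminal T) (Y : C) :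
    ∃ t : Y ⟶ T, Function.Injective (V.map t) → IsRigid V Y := by
  by_cases hY : IsRigid V Y
  · exact ⟨(hT Y).some, fun _ => hY⟩
  · simp only [IsRigid, not_forall] at hY
    obtain ⟨Z, g, hg⟩ := hY
    refine ⟨g ≫ (hT Z).some, fun hinj => ?_⟩
    rw [V.map_comp, ConcreteCategory.coe_comp] at hinj
    exact absurd hinj.of_comp hg

theorem exists_hom_forall_surjective {T : C} (hT : IsWeaklyTerminal T) (Y : C) :
    ∃ t : Y ⟶ T, IsRigid V Y → Function.Surjective (V.map t) →
      ∀ h : Y ⟶ Y, Function.Surjective (V.map h) := by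
  by_cases hY : ∀ h : Y ⟶ Y, Function.Surjective (V.map h)
  · exact ⟨(hT Y).some, fun _ _ => hY⟩
  · simp only [not_forall] at hY
    obtain ⟨h, hh⟩ := hY
    refine ⟨h ≫ (hT Y).some, fun hrigid hsurj => ?_⟩
    rw [V.map_comp, ConcreteCategory.coe_comp] at hsurj
    exact absurd (hsurj.of_comp_left (hrigid _)) hh

variable [HasFilteredColimitsOfSize.{u, u} C]

theorem exists_wellOrderContinuous_succ_iso (J : Type u) [LinearOrder J] [SuccOrder J]
    [OrderBot J] [WellFoundedLT J] [NoMaxOrder J] {T : C} (t : ∀ Y : C, Y ⟶ T) :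
    ∃ F : J ⥤ C, F.IsWellOrderContinuous ∧ (∀ j, Nonempty (T ⟶ F.obj j)) ∧
      ∀ j, ∃ e : F.obj (Order.succ j) ≅ T,
        F.map (homOfLE (Order.le_succ j)) ≫ e.hom = t (F.obj j) := by
  have : HasIterationOfShape J C :=
    { hasColimitsOfShape_of_isSuccLimit := fun j hj => by
        have : Nonempty (Set.Iio j) := ⟨⟨⊥, hj.bot_lt⟩⟩
        exact HasFilteredColimitsOfSize.HasColimitsOfShape _
      hasColimitsOfShape := HasFilteredColimitsOfSize.HasColimitsOfShape J }
  let Φ : SmallObject.SuccStruct C := { X₀ := T, succ := fun _ => T, toSucc := t }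
  refine ⟨Φ.iterationFunctor J, inferInstance, fun j => ⟨(Φ.ιIterationFunctor J).app j⟩,
    fun j => ⟨Φ.iterationFunctorObjSuccIso j (not_isMax j), ?_⟩⟩
  rw [Φ.iterationFunctor_map_succ j (not_isMax j)]
  simp [Φ]

theorem IsWeaklyTerminal.exists_isRigid [PreservesFilteredColimitsOfSize.{u, u} V] {T : C}
    (hT : IsWeaklyTerminal T) : ∃ X : C, IsWeaklyTerminal X ∧ IsRigid V X := by
  -- `t Y` fails to be injective whenever some morphism out of `Y` does, but the transition maps of
  -- a long enough chain iterating `t` are eventually injective.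
  choose t ht using exists_hom_isRigid_of_injective (V := V) hT
  obtain ⟨κ, _, J, _, _, _, _, _, _, hκ, hTκ, -⟩ := exists_regular_wellOrder (V.obj T)
  obtain ⟨F, _, hTF, hF⟩ := exists_wellOrderContinuous_succ_iso J t
  have : PreservesWellOrderContinuousOfShape J V :=
    { preservesColimitsOfShape := fun j hj =>
        have : Nonempty (Set.Iio j) := ⟨⟨⊥, hj.bot_lt⟩⟩
        PreservesFilteredColimitsOfSize.preserves_filtered_colimits _ }
  have hcard (j : J) : Cardinal.mk ((F ⋙ V).obj (Order.succ j)) < κ := by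
    obtain ⟨e, -⟩ := hF j
    rwa [(V.mapIso e).toEquiv.cardinal_eq]
  obtain ⟨j, hj⟩ := exists_forall_injective_map hκ (F ⋙ V) hcard
  obtain ⟨e, he⟩ := hF j
  refine ⟨F.obj j, hT.of_hom (hTF j).some, ht _ ?_⟩
  rw [← he, V.map_comp, ConcreteCategory.coe_comp]
  exact (ConcreteCategory.bijective_of_isIso _).1.comp (hj _ (Order.le_succ j))

theorem IsWeaklyTerminal.exists_forall_bijective [PreservesFilteredColimitsOfSize.{u, u} V]
    {T : C} (hT : IsWeaklyTerminal T) :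
    ∃ X : C, IsWeaklyTerminal X ∧ ∀ h : X ⟶ X, Function.Bijective (V.map h) := by
  obtain ⟨T, hT, hTrigid⟩ := hT.exists_isRigid (V := V)
  -- `t Y` fails to be surjective whenever some endomorphism of `Y` does, but a strictly increasing
  -- chain of subsets of `V.obj T` cannot have length greater than the cardinality of `V.obj T`.
  choose t ht using exists_hom_forall_surjective (V := V) hT
  obtain ⟨κ, _, J, _, _, _, _, _, _, -, hTκ, hJκ⟩ := exists_regular_wellOrder (V.obj T)
  obtain ⟨F, _, hTF, hF⟩ := exists_wellOrderContinuous_succ_iso J t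
  have hrigid (j : J) : IsRigid V (F.obj (Order.succ j)) := hTrigid.of_iso (hF j).choose.symm
  have : HasColimitsOfShape J C := HasFilteredColimitsOfSize.HasColimitsOfShape J
  let c : Cocone F := (colimit.cocone F).extend (hT _).some
  obtain ⟨j, hj⟩ := exists_surjective_map_succ (V.mapCocone c) (fun j => hrigid j _)
    (hTκ.trans_eq hJκ.symm)
  obtain ⟨e, he⟩ := hF (Order.succ j)
  refine ⟨F.obj (Order.succ j), hT.of_hom (hTF _).some,
    fun h => ⟨hrigid j h, ht _ (hrigid j) ?_ h⟩⟩
  rw [← he, V.map_comp, ConcreteCategory.coe_comp]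
  exact (ConcreteCategory.bijective_of_isIso _).2.comp hj

end WeaklyTerminal

section FilteredColimits

variable {S : Type u} [Ring S]

/-- `Hom(S, -)` is naturally the forgetful functor. -/
noncomputable def coyonedaSelfIso :
    coyoneda.obj (Opposite.op (ModuleCat.of S S)) ≅ forget (ModuleCat.{u} S) :=
  NatIso.ofComponents fun M =>
    (ModuleCat.homEquiv.trans (LinearMap.ringLmapEquivSelf S ℕ M).toEquiv).toIso

theorem isFinitelyPresentable_self : IsFinitelyPresentable.{u} (ModuleCat.of S S) := by
  rw [isFinitelyPresentable_iff_preservesFilteredColimits]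
  exact ⟨fun J _ _ => preservesColimitsOfShape_of_natIso coyonedaSelfIso.symm⟩

theorem isFinitelyPresentable_pi (n : ℕ) :
    IsFinitelyPresentable.{u} (ModuleCat.of S (Fin n → S)) := by
  have : Fact Cardinal.aleph0.{u}.IsRegular := Cardinal.fact_isRegular_aleph0
  have (j : Discrete (Fin n)) : IsCardinalPresentable
      ((Discrete.functor fun _ : Fin n => ModuleCat.of S S).obj j) Cardinal.aleph0.{u} :=
    isFinitelyPresentable_self
  have : IsFinitelyPresentable.{u} (⨁ fun _ : Fin n => ModuleCat.of S S) := by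
    have hfinite : HasCardinalLT (Arrow (Discrete (Fin n))) Cardinal.aleph0.{u} := by
      rw [hasCardinalLT_aleph0_iff]
      infer_instance
    exact isCardinalPresentable_of_isColimit _ (biproduct.isColimit _) _ hfinite
  exact isCardinalPresentable_of_iso (ModuleCat.biproductIsoPi fun _ : Fin n => ModuleCat.of S S) _

theorem isPureEpi_sigmaDesc {J : Type u} [SmallCategory J] [IsFiltered J]
    {F : J ⥤ ModuleCat.{u} S} {c : Cocone F} (hc : IsColimit c) :
    IsPureEpi (Sigma.desc c.ι.app).hom := by
  intro m n a z hz
  have := isFinitelyPresentable_pi (S := S)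
  obtain ⟨j, y, hy⟩ := IsFinitelyPresentable.exists_hom_of_isColimit hc (ModuleCat.ofHom z)
  obtain ⟨k, u, v, huv⟩ := IsFinitelyPresentable.exists_eq_of_isColimit hc (ModuleCat.ofHom a ≫ y)
    (0 : _ ⟶ F.obj j) (by rw [assoc, hy, ← ModuleCat.ofHom_comp, hz, zero_comp]; rfl)
  have hay : ModuleCat.ofHom a ≫ y ≫ F.map u = 0 := by rw [← assoc, huv, zero_comp]
  refine ⟨(y ≫ F.map u ≫ Sigma.ι F.obj k).hom, ?_, ?_⟩
  · change (ModuleCat.ofHom a ≫ y ≫ F.map u ≫ Sigma.ι F.obj k).hom = 0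
    rw [reassoc_of% hay, zero_comp]
    rfl
  · change ((y ≫ F.map u ≫ Sigma.ι F.obj k) ≫ Sigma.desc c.ι.app).hom = z
    rw [assoc, assoc, Sigma.ι_desc, c.w, hy]
    rfl

end FilteredColimits

section Covers

/-- Closure of a class of objects under coproducts indexed by types in the universe `u`. -/
def ClosedUnderCoproducts {C : Type*} [Category* C] [HasCoproducts.{u} C] (𝒳 : Set C) : Prop :=
  ∀ {I : Type u} (X : I → C), (∀ i, X i ∈ 𝒳) → ∐ X ∈ 𝒳

/-- Closure of a class of modules under pure epimorphic images. -/
def ClosedUnderPureEpis {S : Type*} [Ring S] (𝒳 : Set (ModuleCat.{u} S)) : Prop :=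
  ∀ ⦃X Z : ModuleCat.{u} S⦄ (σ : X ⟶ Z), IsPureEpi σ.hom → X ∈ 𝒳 → Z ∈ 𝒳

variable {S : Type u} [Ring S] {𝒳 : Set (ModuleCat.{u} S)}

theorem ClosedUnderPureEpis.mem_of_isColimit (hpure : ClosedUnderPureEpis 𝒳)
    (hcoprod : ClosedUnderCoproducts.{u} 𝒳) {J : Type u} [SmallCategory J] [IsFiltered J]
    {F : J ⥤ ModuleCat.{u} S} (hF : ∀ j, F.obj j ∈ 𝒳) {c : Cocone F} (hc : IsColimit c) :
    c.pt ∈ 𝒳 :=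
  hpure _ (isPureEpi_sigmaDesc hc) (hcoprod F.obj hF)

theorem ClosedUnderPureEpis.exists_isPrecover (hpure : ClosedUnderPureEpis 𝒳)
    (hcoprod : ClosedUnderCoproducts.{u} 𝒳) (A : ModuleCat.{u} S) :
    ∃ (X : ModuleCat.{u} S) (f : X ⟶ A), IsPrecover 𝒳 f := by
  obtain ⟨F, _, _, hF⟩ := exists_isPureEpi_quotient_factorization (R := S) A
  let I : Type u :=
    {p : (K : Submodule S F) × ((F ⧸ K) →ₗ[S] A) // ModuleCat.of S (F ⧸ p.1) ∈ 𝒳}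
  let X (p : I) : ModuleCat.{u} S := ModuleCat.of S (F ⧸ p.1.1)
  let f (p : I) : X p ⟶ A := ModuleCat.ofHom p.1.2
  refine ⟨∐ X, Sigma.desc f, hcoprod X fun p => p.2, fun X' hX' g => ?_⟩
  obtain ⟨K, σ, g', hσ, hg⟩ := hF g.hom
  let p : I := ⟨⟨K, g'⟩, hpure (ModuleCat.ofHom σ) hσ hX'⟩
  refine ⟨ModuleCat.ofHom σ ≫ Sigma.ι X p, ?_⟩
  rw [assoc, Sigma.ι_desc]
  exact ModuleCat.hom_ext hg

/-- The objects of `Over A` whose source lies in `𝒳`; a weakly terminal one is an `𝒳`-precover. -/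
def overProperty {C : Type*} [Category* C] (𝒳 : Set C) (A : C) : ObjectProperty (Over A) :=
  fun Y => Y.left ∈ 𝒳

theorem ClosedUnderPureEpis.isClosedUnderColimitsOfShape_overProperty
    (hpure : ClosedUnderPureEpis 𝒳) (hcoprod : ClosedUnderCoproducts.{u} 𝒳)
    (A : ModuleCat.{u} S) (J : Type u) [SmallCategory J] [IsFiltered J] :
    (overProperty 𝒳 A).IsClosedUnderColimitsOfShape J where
  colimitsOfShape_le := by
    rintro Y ⟨p⟩
    exact hpure.mem_of_isColimit hcoprod p.prop_diag_obj
      (isColimitOfPreserves (Over.forget A) p.isColimit)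

theorem ClosedUnderPureEpis.exists_isCover (hpure : ClosedUnderPureEpis 𝒳)
    (hcoprod : ClosedUnderCoproducts.{u} 𝒳) (A : ModuleCat.{u} S) :
    ∃ (X : ModuleCat.{u} S) (f : X ⟶ A), IsCover 𝒳 f := by
  let P := overProperty 𝒳 A
  have hP := hpure.isClosedUnderColimitsOfShape_overProperty hcoprod A
  have : HasFilteredColimitsOfSize.{u, u} P.FullSubcategory := ⟨fun _ _ _ => inferInstance⟩
  have : PreservesFilteredColimitsOfSize.{u, u} P.ι := ⟨fun _ _ _ => inferInstance⟩
  let V : P.FullSubcategory ⥤ Type u := P.ι ⋙ Over.forget A ⋙ forget _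
  obtain ⟨T, f, hT, hf⟩ := hpure.exists_isPrecover hcoprod A
  have hTwt : IsWeaklyTerminal (⟨Over.mk f, hT⟩ : P.FullSubcategory) := fun Y =>
    have ⟨h, hh⟩ := hf Y.obj.left Y.property Y.obj.hom
    ⟨P.homMk (Over.homMk h hh)⟩
  obtain ⟨X, hX, hXbij⟩ := hTwt.exists_forall_bijective (V := V)
  refine ⟨X.obj.left, X.obj.hom, ⟨X.property, fun X' hX' g => ?_⟩, fun h hh => ?_⟩
  · obtain ⟨s⟩ := hX ⟨Over.mk g, hX'⟩
    exact ⟨s.hom.left, Over.w s.hom⟩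
  · exact (ConcreteCategory.isIso_iff_bijective h).2 (hXbij (P.homMk (Over.homMk h hh)))

end Covers

section LeftPerp

variable {𝒜 : Type u} [Category.{v} 𝒜] [Abelian 𝒜]

namespace ExactStructure

variable (E : ExactStructure 𝒜)

theorem exists_conflation_pullback_snd {S : ShortComplex 𝒜} (hS : E.conflation S) {M : 𝒜}
    (h : M ⟶ S.X₃) :
    ∃ (i : S.X₁ ⟶ pullback S.g h) (w : i ≫ pullback.snd S.g h = 0),
      E.conflation (ShortComplex.mk i (pullback.snd S.g h) w) := by
  have hSexact := E.shortExact_of_conflation _ hS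
  have := hSexact.mono_f
  let i : S.X₁ ⟶ pullback S.g h := pullback.lift S.f 0 (by rw [S.zero, zero_comp])
  have hi : i ≫ pullback.fst S.g h = S.f := pullback.lift_fst _ _ _
  have w : i ≫ pullback.snd S.g h = 0 := pullback.lift_snd _ _ _
  have : Mono i := mono_of_mono_fac hi
  have hkernel : IsLimit (KernelFork.ofι i w) := KernelFork.IsLimit.ofι' i w fun k hk =>
    have hk' : (k ≫ pullback.fst S.g h) ≫ S.g = 0 := by
      rw [assoc, pullback.condition, ← assoc, hk, zero_comp]
    ⟨hSexact.exact.lift _ hk', pullback.hom_ext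
      (by rw [assoc, hi, hSexact.exact.lift_f]) (by rw [assoc, w, comp_zero, hk])⟩
  obtain ⟨X, f, wf, hf⟩ := E.admEpi_pullback S.g h ⟨S.X₁, S.f, S.zero, hS⟩
  let e : X ≅ S.X₁ :=
    (E.shortExact_of_conflation _ hf).fIsKernel.conePointUniqueUpToIso hkernel
  have he : e.hom ≫ i = f :=
    IsLimit.conePointUniqueUpToIso_hom_comp _ hkernel WalkingParallelPair.zero
  refine ⟨i, w, E.conflation_of_iso _ _ ?_ hf⟩
  exact ShortComplex.isoMk e (Iso.refl _) (Iso.refl _) (by simpa using he) (by simp)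

variable {E}

theorem mem_leftPerp_iff {𝒴 : Set 𝒜} {M : 𝒜} :
    M ∈ E.leftPerp 𝒴 ↔ ∀ S : ShortComplex 𝒜, E.conflation S → S.X₁ ∈ 𝒴 →
      ∀ h : M ⟶ S.X₃, ∃ k : M ⟶ S.X₂, k ≫ S.g = h := by
  constructor
  · intro hM S hS hS𝒴 h
    obtain ⟨i, w, hpull⟩ := E.exists_conflation_pullback_snd hS h
    obtain ⟨r, hr⟩ := hM _ hS𝒴 _ i _ w hpull
    have hexact := E.shortExact_of_conflation _ hpull
    let s := ShortComplex.Splitting.ofExactOfRetraction _ hexact.exact r hr hexact.epi_g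
    have hs : s.s ≫ pullback.snd S.g h = 𝟙 M := s.s_g
    exact ⟨s.s ≫ pullback.fst S.g h, by
      rw [assoc, pullback.condition, ← assoc, hs, id_comp]⟩
  · intro hM Y hY Z i p w hconf
    obtain ⟨k, hk⟩ := hM _ hconf hY (𝟙 M)
    have hexact := E.shortExact_of_conflation _ hconf
    let s := ShortComplex.Splitting.ofExactOfSection _ hexact.exact k hk hexact.mono_f
    exact ⟨s.r, s.f_r⟩

theorem sigma_mem_leftPerp {𝒴 : Set 𝒜} {I : Type*} (X : I → 𝒜) [HasCoproduct X]
    (hX : ∀ i, X i ∈ E.leftPerp 𝒴) : ∐ X ∈ E.leftPerp 𝒴 := by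
  refine mem_leftPerp_iff.2 fun S hS hS𝒴 h => ?_
  choose k hk using fun i => mem_leftPerp_iff.1 (hX i) S hS hS𝒴 (Sigma.ι X i ≫ h)
  exact ⟨Sigma.desc k, Sigma.hom_ext _ _ fun i => by rw [← assoc, Sigma.ι_desc, hk]⟩

theorem mem_leftPerp_of_shortExact {𝒴 : Set 𝒜} {S : ShortComplex 𝒜} (hS : S.ShortExact)
    (hext : ∀ Y ∈ 𝒴, ∀ a : S.X₁ ⟶ Y, ∃ b : S.X₂ ⟶ Y, S.f ≫ b = a)
    (hS₂ : S.X₂ ∈ E.leftPerp 𝒴) : S.X₃ ∈ E.leftPerp 𝒴 := by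
  refine mem_leftPerp_iff.2 fun T hT hT𝒴 h => ?_
  have := (E.shortExact_of_conflation _ hT).mono_f
  have := hS.epi_g
  obtain ⟨k, hk⟩ := mem_leftPerp_iff.1 hS₂ T hT hT𝒴 (S.g ≫ h)
  obtain ⟨a, ha⟩ : ∃ a : S.X₁ ⟶ T.X₁, a ≫ T.f = S.f ≫ k :=
    ⟨_, (E.shortExact_of_conflation _ hT).exact.lift_f (S.f ≫ k) (by
      rw [assoc, hk, ← assoc, S.zero, zero_comp])⟩
  obtain ⟨b, hb⟩ := hext _ hT𝒴 a
  -- `k` is corrected by a map into `T.X₁` so that it vanishes on `S.X₁`.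
  have hcorr : S.f ≫ (k - b ≫ T.f) = 0 := by
    rw [Preadditive.comp_sub, ← assoc, hb, ha, sub_self]
  refine ⟨hS.exact.desc _ hcorr, ?_⟩
  rw [← cancel_epi S.g, ← assoc, hS.exact.g_desc, Preadditive.sub_comp, hk, assoc, T.zero,
    comp_zero, sub_zero]

end ExactStructure

end LeftPerp

section PureInjective

variable {R : Type u} [Ring R] {E : ExactStructure (ModuleCat.{u} Rᵐᵒᵖ)}
  {𝒴 : Set (ModuleCat.{u} Rᵐᵒᵖ)}

theorem IsPureEpi.pureSES_kernel {X Z : ModuleCat.{u} Rᵐᵒᵖ} {σ : X ⟶ Z} (hσ : IsPureEpi σ.hom) :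
    PureSES (ShortComplex.mk (kernel.ι σ) σ (kernel.condition σ)) := by
  have : Epi σ := (ModuleCat.epi_iff_surjective σ).2 hσ.surjective
  refine ⟨{ exact := ShortComplex.exact_kernel σ }, fun F _ h => ?_⟩
  obtain ⟨k, hk⟩ := hσ.exists_lift h.hom
  exact ⟨ModuleCat.ofHom k, ModuleCat.hom_ext hk⟩

theorem mem_leftPerp_of_pureSES (h𝒴 : ∀ Y ∈ 𝒴, PureInjective Y)
    {S : ShortComplex (ModuleCat.{u} Rᵐᵒᵖ)} (hS : PureSES S) (hS₂ : S.X₂ ∈ E.leftPerp 𝒴) :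
    S.X₃ ∈ E.leftPerp 𝒴 :=
  ExactStructure.mem_leftPerp_of_shortExact hS.1 (fun Y hY a => h𝒴 Y hY S hS a) hS₂

theorem closedUnderPureEpis_leftPerp (h𝒴 : ∀ Y ∈ 𝒴, PureInjective Y) :
    ClosedUnderPureEpis (E.leftPerp 𝒴) :=
  fun _ _ _ hσ hX => mem_leftPerp_of_pureSES h𝒴 hσ.pureSES_kernel hX

end PureInjective

end ExactPaper

open ExactPaper CategoryTheory Limits in
theorem leftPerp_covering_of_pureInjective_general
    {R : Type u} [Ring R]
    (E : ExactStructure (ModuleCat.{u} Rᵐᵒᵖ))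
    (𝒴 : Set (ModuleCat.{u} Rᵐᵒᵖ)) (h𝒴 : ∀ Y ∈ 𝒴, PureInjective Y) :
    (∀ A : ModuleCat.{u} Rᵐᵒᵖ, ∃ (X : ModuleCat.{u} Rᵐᵒᵖ) (f : X ⟶ A),
      IsCover (E.leftPerp 𝒴) f) ∧
    (∀ S : ShortComplex (ModuleCat.{u} Rᵐᵒᵖ), PureSES S →
      S.X₂ ∈ E.leftPerp 𝒴 → S.X₃ ∈ E.leftPerp 𝒴) :=
  ⟨(closedUnderPureEpis_leftPerp h𝒴).exists_isCover fun X => ExactStructure.sigma_mem_leftPerp X,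
    fun _ => mem_leftPerp_of_pureSES h𝒴⟩

open ExactPaper CategoryTheory Limits in
/-- **Theorem 4.4(2)**: let `ℰ` be an exact structure on `Mod R` with enough
`ℰ`-projectives and `ℰ`-injectives containing all pure exact sequences. If `𝒴` is a class
of pure injective right `R`-modules, then `^⊥𝒴` is covering and closed under pure
quotients. -/
theorem leftPerp_covering_of_pureInjective
    {R : Type u} [Ring R]
    (E : ExactStructure (ModuleCat.{u} Rᵐᵒᵖ))
    (hproj : E.EnoughProjectives) (hinj : E.EnoughInjectives)
    (hpure : ∀ S : ShortComplex (ModuleCat.{u} Rᵐᵒᵖ), PureSES S → E.conflation S)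
    (𝒴 : Set (ModuleCat.{u} Rᵐᵒᵖ)) (h𝒴 : ∀ Y ∈ 𝒴, PureInjective Y) :
    (∀ A : ModuleCat.{u} Rᵐᵒᵖ, ∃ (X : ModuleCat.{u} Rᵐᵒᵖ) (f : X ⟶ A),
      IsCover (E.leftPerp 𝒴) f) ∧
    (∀ S : ShortComplex (ModuleCat.{u} Rᵐᵒᵖ), PureSES S →
      S.X₂ ∈ E.leftPerp 𝒴 → S.X₃ ∈ E.leftPerp 𝒴) := by
  exact leftPerp_covering_of_pureInjective_general E 𝒴 h𝒴
end

section
/- Let R be an associative unital ring and let 𝒳 be a class of pure projective right R-modules. Then the class 𝒳^⊥₁ = {N : Ext¹_R(X,N) = 0 for all X ∈ 𝒳} is preenveloping: every right R-module admits an 𝒳^⊥₁-preenvelope. If moreover R is right coherent and every module in 𝒳 is finitely presented, then 𝒳^⊥₁ is also covering: every right R-module admits an 𝒳^⊥₁-cover. -/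
open CategoryTheory Category Limits

universe v u

namespace ExactPaper

open CategoryTheory Limits

variable {𝒜 : Type u} [Category.{v} 𝒜] [Abelian 𝒜]

/-- Classical `Ext¹_𝒜(M,N) = 0`: every short exact sequence `0 → N → Z → M → 0` splits. -/
def Ext1ZeroClassical (M N : 𝒜) : Prop :=
  ∀ (Z : 𝒜) (i : N ⟶ Z) (p : Z ⟶ M) (w : i ≫ p = 0),
    (ShortComplex.mk i p w).ShortExact → ∃ r : Z ⟶ N, i ≫ r = 𝟙 N

/-- The classical right orthogonal class `𝒳^⊥₁`. -/
def rightPerp1 (𝒳 : Set 𝒜) : Set 𝒜 := {N | ∀ X ∈ 𝒳, Ext1ZeroClassical X N}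

/-- The classical left orthogonal class `^⊥₁𝒴`. -/
def leftPerp1 (𝒴 : Set 𝒜) : Set 𝒜 := {M | ∀ Y ∈ 𝒴, Ext1ZeroClassical M Y}

/-- `(𝒳,𝒴)` is a complete hereditary classical cotorsion pair in `𝒜`. -/
def CompleteHereditaryClassicalCotorsionPair (𝒳 𝒴 : Set 𝒜) : Prop :=
  𝒳 = leftPerp1 𝒴 ∧ 𝒴 = rightPerp1 𝒳 ∧
  (∀ A : 𝒜, ∃ (Y X : 𝒜) (i : Y ⟶ X) (p : X ⟶ A) (w : i ≫ p = 0),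
      (ShortComplex.mk i p w).ShortExact ∧ X ∈ 𝒳 ∧ Y ∈ 𝒴) ∧
  (∀ A : 𝒜, ∃ (Y' X' : 𝒜) (i : A ⟶ Y') (p : Y' ⟶ X') (w : i ≫ p = 0),
      (ShortComplex.mk i p w).ShortExact ∧ X' ∈ 𝒳 ∧ Y' ∈ 𝒴) ∧
  (∀ (S : ShortComplex 𝒜), S.ShortExact → S.X₂ ∈ 𝒳 → S.X₃ ∈ 𝒳 → S.X₁ ∈ 𝒳)

end ExactPaper

/-!
A class of modules closed under pure submodules and products is preenveloping: every map `A ⟶ Y`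
factors through a pure submodule of `Y` whose size is bounded in terms of `A` (a Skolem hull for
finite linear systems), so the product of all small modules of the class under `A` is a
preenvelope. Pure projectivity makes `𝒳^⊥₁` closed under pure submodules.

If `R` is right coherent and `𝒳` consists of finitely presented modules, first syzygies of modules
in `𝒳` can be chosen finitely presented, so `𝒳^⊥₁` is closed under pure quotients and filtered
colimits. Dividing the source of `Y ⟶ A` by a maximal pure submodule of the kernel bounds its size
in terms of `A`, hence every object of the category of maps `Y ⟶ A` with `Y` in `𝒳^⊥₁` maps to a
small one. A transfinite iteration, which has to stabilise for cardinality reasons, produces an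
object all of whose maps out are injective, and a second one produces an object all of whose maps
to objects of the first kind are bijective; the latter is a cover of `A`.
-/

namespace PerpCover

open ExactPaper

section Ext1

variable {𝒜 : Type u} [Category.{v} 𝒜] [Abelian 𝒜]

lemma shortExact_pushout {S : ShortComplex 𝒜} (hS : S.ShortExact) {N : 𝒜} (h : S.X₁ ⟶ N) :
    (ShortComplex.mk (pushout.inr S.f h) (pushout.desc S.g (0 : N ⟶ S.X₃) (by simp))
      (pushout.inr_desc _ _ _)).ShortExact := by
  have := hS.mono_f
  have := hS.epi_g
  have hepi : Epi (pushout.desc S.g (0 : N ⟶ S.X₃) (by simp : S.f ≫ S.g = h ≫ 0)) :=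
    epi_of_epi_fac (pushout.inl_desc _ _ _)
  refine ⟨ShortComplex.exact_of_g_is_cokernel _ ?_⟩
  refine CokernelCofork.IsColimit.ofπ _ _
    (fun k hk ↦ hS.exact.desc (pushout.inl _ _ ≫ k) (by
      rw [pushout.condition_assoc, hk, comp_zero])) (fun k hk ↦ ?_) (fun k hk m hm ↦ ?_)
  · apply pushout.hom_ext
    · rw [pushout.inl_desc_assoc, hS.exact.g_desc]
    · rw [pushout.inr_desc_assoc, zero_comp, hk]
  · rw [← cancel_epi S.g, hS.exact.g_desc, ← hm, pushout.inl_desc_assoc]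

lemma exists_extension_of_ext1Zero {S : ShortComplex 𝒜} (hS : S.ShortExact) {N : 𝒜}
    (hN : Ext1ZeroClassical S.X₃ N) (h : S.X₁ ⟶ N) : ∃ e : S.X₂ ⟶ N, S.f ≫ e = h := by
  obtain ⟨r, hr⟩ := hN _ _ _ _ (shortExact_pushout hS h)
  exact ⟨pushout.inl _ _ ≫ r, by rw [pushout.condition_assoc, hr, comp_id]⟩

lemma ext1Zero_of_forall_factors {S : ShortComplex 𝒜} (hS : S.ShortExact) [Projective S.X₂]
    {N : 𝒜} (hN : ∀ h : S.X₁ ⟶ N, ∃ (N' : 𝒜) (k : S.X₁ ⟶ N') (g : N' ⟶ N),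
      k ≫ g = h ∧ Ext1ZeroClassical S.X₃ N') : Ext1ZeroClassical S.X₃ N := by
  intro Z i p w hT
  have := hS.epi_g
  have := hT.epi_g
  have := hT.mono_f
  let t : S.X₂ ⟶ Z := Projective.factorThru S.g p
  have ht : t ≫ p = S.g := Projective.factorThru_comp _ _
  let h : S.X₁ ⟶ N := hT.exact.lift (S.f ≫ t) (by rw [assoc, ht, S.zero])
  have hh : h ≫ i = S.f ≫ t := hT.exact.lift_f _ _
  obtain ⟨N', k, g, hkg, hN'⟩ := hN h
  obtain ⟨e, he⟩ := exists_extension_of_ext1Zero hS hN' k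
  let s : S.X₃ ⟶ Z := hS.exact.desc (t - e ≫ g ≫ i) (by
    rw [Preadditive.comp_sub, reassoc_of% he, reassoc_of% hkg, hh, sub_self])
  have hs : s ≫ p = 𝟙 _ := by
    rw [← cancel_epi S.g, hS.exact.g_desc_assoc, Preadditive.sub_comp, ht, assoc, assoc, w]
    simp
  exact ⟨_, (ShortComplex.Splitting.ofExactOfSection _ hT.exact s hs hT.mono_f).f_r⟩

lemma ext1Zero_of_isLimit_discrete {M : 𝒜} {J : Type*} {F : Discrete J ⥤ 𝒜} {c : Cone F}
    (hc : IsLimit c) (hF : ∀ j, Ext1ZeroClassical M (F.obj j)) : Ext1ZeroClassical M c.pt := by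
  intro Z i p w hS
  choose e he using fun j ↦ exists_extension_of_ext1Zero hS (hF j) (c.π.app j)
  exact ⟨hc.lift ⟨Z, Discrete.natTrans e⟩, hc.hom_ext fun j ↦ by
    rw [assoc, hc.fac, id_comp]; exact he j⟩

lemma ext1Zero_of_iso {M N N' : 𝒜} (e : N ≅ N') (hN : Ext1ZeroClassical M N) :
    Ext1ZeroClassical M N' := by
  intro Z i p w hS
  obtain ⟨r, hr⟩ := exists_extension_of_ext1Zero hS hN e.inv
  exact ⟨r ≫ e.hom, by rw [reassoc_of% hr, e.inv_hom_id]⟩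

lemma ext1Zero_coprod {M N N' : 𝒜} (hN : Ext1ZeroClassical M N) (hN' : Ext1ZeroClassical M N') :
    Ext1ZeroClassical M (N ⨿ N') :=
  ext1Zero_of_iso (biprod.isoCoprod N N') <|
    ext1Zero_of_isLimit_discrete (BinaryBiproduct.isLimit N N') <| by
      rintro ⟨_ | _⟩
      exacts [hN, hN']

lemma ext1Zero_of_isZero (M : 𝒜) {N : 𝒜} (hN : IsZero N) : Ext1ZeroClassical M N :=
  fun _ _ _ _ _ ↦ ⟨0, hN.eq_of_src _ _⟩

lemma ext1Zero_X₁_of_forall_lifts {S : ShortComplex 𝒜} (hS : S.ShortExact) {M : 𝒜}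
    (hM : Ext1ZeroClassical M S.X₂) (hlift : ∀ h : M ⟶ S.X₃, ∃ k : M ⟶ S.X₂, k ≫ S.g = h) :
    Ext1ZeroClassical M S.X₁ := by
  intro Z i p w hT
  have := hS.mono_f
  have := hT.epi_g
  obtain ⟨e, he⟩ := exists_extension_of_ext1Zero hT hM S.f
  obtain ⟨k, hk⟩ := hlift (hT.exact.desc (e ≫ S.g) (by rw [reassoc_of% he, S.zero]))
  have hepk : (e - p ≫ k) ≫ S.g = 0 := by
    rw [Preadditive.sub_comp, assoc, hk, hT.exact.g_desc, sub_self]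
  refine ⟨hS.exact.lift _ hepk, ?_⟩
  rw [← cancel_mono S.f, assoc, hS.exact.lift_f, Preadditive.comp_sub, he, reassoc_of% w,
    zero_comp, sub_zero, id_comp]

end Ext1

section Purity

variable {S : Type*} [Ring S] {Y : Type*} [AddCommGroup Y] [Module S Y]

/-- Purity of a submodule `P` of `Y`, as solvability of finite linear systems: a linear map from
a finite free module to `Y` which sends a finitely generated submodule `K` into `P` agrees on `K`
with one that takes all its values in `P`. -/
def IsPure (P : Submodule S Y) : Prop :=
  ∀ (n : ℕ) (K : Submodule S (Fin n → S)), K.FG → ∀ y : (Fin n → S) →ₗ[S] Y,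
    (∀ a ∈ K, y a ∈ P) → ∃ x : (Fin n → S) →ₗ[S] Y, (∀ a, x a ∈ P) ∧ ∀ a ∈ K, x a = y a

lemma isPure_bot : IsPure (⊥ : Submodule S Y) :=
  fun _ _ _ _ hy ↦ ⟨0, fun _ ↦ Submodule.zero_mem _, fun a ha ↦ (hy a ha).symm⟩

lemma isPure_sSup_of_directedOn {c : Set (Submodule S Y)} (hne : c.Nonempty)
    (hdir : DirectedOn (· ≤ ·) c) (hc : ∀ P ∈ c, IsPure P) : IsPure (sSup c) := by
  intro n K hK y hy
  obtain ⟨P, hPc, hP⟩ : ∃ P ∈ c, K.map y ≤ P :=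
    (Submodule.fg_iff_compact _).mp (hK.map y) c _ hne hdir (isLUB_sSup c)
      (Submodule.map_le_iff_le_comap.mpr hy)
  obtain ⟨x, hx, hxy⟩ := hc P hPc n K hK y (Submodule.map_le_iff_le_comap.mp hP)
  exact ⟨x, fun a ↦ le_sSup hPc (hx a), hxy⟩

lemma IsPure.comap_mkQ {P : Submodule S Y} (hP : IsPure P) {D : Submodule S (Y ⧸ P)}
    (hD : IsPure D) : IsPure (D.comap P.mkQ) := by
  intro n K hK y hy
  obtain ⟨d, hdD, hdy⟩ := hD n K hK (P.mkQ ∘ₗ y) hy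
  obtain ⟨d', hd'⟩ := Module.projective_lifting_property P.mkQ d P.mkQ_surjective
  have hmkQ (a) : P.mkQ (d' a) = d a := LinearMap.congr_fun hd' a
  obtain ⟨x, hxP, hxy⟩ := hP n K hK (y - d') fun a ha ↦ by
    rw [← Submodule.Quotient.mk_eq_zero, ← Submodule.mkQ_apply, LinearMap.sub_apply, map_sub,
      hmkQ, hdy a ha, LinearMap.comp_apply, sub_self]
  refine ⟨x + d', fun a ↦ ?_, fun a ha ↦ by simp [hxy a ha]⟩
  rw [Submodule.mem_comap, LinearMap.add_apply, map_add, hmkQ, Submodule.mkQ_apply,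
    (Submodule.Quotient.mk_eq_zero P).mpr (hxP a), zero_add]
  exact hdD a

lemma IsPure.exists_lift {P : Submodule S Y} (hP : IsPure P) {M : Type*} [AddCommGroup M]
    [Module S M] [Module.FinitePresentation S M] (φ : M →ₗ[S] Y ⧸ P) :
    ∃ ψ : M →ₗ[S] Y, P.mkQ ∘ₗ ψ = φ := by
  obtain ⟨n, K, e, hK⟩ := Module.FinitePresentation.exists_fin S M
  obtain ⟨y, hy⟩ := Module.projective_lifting_property P.mkQ
    (φ ∘ₗ e.symm.toLinearMap ∘ₗ K.mkQ) P.mkQ_surjective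
  have hmkQ (a) : P.mkQ (y a) = φ (e.symm (K.mkQ a)) := LinearMap.congr_fun hy a
  obtain ⟨x, hxP, hxy⟩ := hP n K hK y fun a ha ↦ by
    rw [← Submodule.Quotient.mk_eq_zero, ← Submodule.mkQ_apply, hmkQ, Submodule.mkQ_apply,
      (Submodule.Quotient.mk_eq_zero K).mpr ha, map_zero, map_zero]
  have hker : K ≤ LinearMap.ker (y - x) := fun a ha ↦ by simp [hxy a ha]
  refine ⟨K.liftQ (y - x) hker ∘ₗ e.toLinearMap, LinearMap.ext fun m ↦ ?_⟩
  obtain ⟨a, ha⟩ := K.mkQ_surjective (e m)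
  have hx : P.mkQ (x a) = 0 := (Submodule.Quotient.mk_eq_zero P).mpr (hxP a)
  simp only [LinearMap.comp_apply, LinearEquiv.coe_coe, ← ha, Submodule.mkQ_apply K,
    Submodule.liftQ_apply, LinearMap.sub_apply, map_sub, hx, sub_zero, hmkQ]
  rw [← Submodule.mkQ_apply, ha, e.symm_apply_apply]

lemma isPure_range_of_ker_comp_le {F Z : Type*} [AddCommGroup F] [Module S F] [AddCommGroup Z]
    [Module S Z] (d : F →ₗ[S] Y) (g : Y →ₗ[S] Z)
    (hker : LinearMap.ker (g ∘ₗ d) ≤ LinearMap.ker d) (hpure : IsPure (LinearMap.range (g ∘ₗ d))) :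
    IsPure (LinearMap.range d) := by
  intro n K hK y hy
  obtain ⟨z, hz, hzy⟩ := hpure n K hK (g ∘ₗ y) fun a ha ↦ by
    obtain ⟨b, hb⟩ := hy a ha
    exact ⟨b, congrArg g hb⟩
  obtain ⟨x, hx⟩ := Module.projective_lifting_property (g ∘ₗ d).rangeRestrict
    (z.codRestrict _ hz) (LinearMap.surjective_rangeRestrict _)
  have hgdx (a) : g (d (x a)) = z a := congrArg Subtype.val (LinearMap.congr_fun hx a)
  refine ⟨d ∘ₗ x, fun a ↦ ⟨x a, rfl⟩, fun a ha ↦ ?_⟩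
  obtain ⟨b, hb⟩ := hy a ha
  have hmem : x a - b ∈ LinearMap.ker (g ∘ₗ d) := by
    simp [hgdx, hb, hzy a ha]
  simpa [hb, sub_eq_zero] using hker hmem

end Purity

section PureShortExact

variable {R : Type u} [Ring R] {Y : Type u} [AddCommGroup Y] [Module Rᵐᵒᵖ Y]
  {P : Submodule Rᵐᵒᵖ Y}

lemma IsPure.pureSES (hP : IsPure P) : PureSES P.mkQ.shortComplexKer := by
  refine ⟨LinearMap.shortExact_shortComplexKer P.mkQ_surjective, fun F _ h ↦ ?_⟩
  obtain ⟨ψ, hψ⟩ := hP.exists_lift h.hom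
  exact ⟨ModuleCat.ofHom ψ, ModuleCat.hom_ext hψ⟩

lemma IsPure.mem_rightPerp1 (hP : IsPure P) {𝒳 : Set (ModuleCat.{u} Rᵐᵒᵖ)}
    (h𝒳 : ∀ X ∈ 𝒳, PureProjective X) (hY : ModuleCat.of Rᵐᵒᵖ Y ∈ rightPerp1 𝒳) :
    ModuleCat.of Rᵐᵒᵖ P ∈ rightPerp1 𝒳 := by
  intro X hX
  have hker : Ext1ZeroClassical X (ModuleCat.of Rᵐᵒᵖ (LinearMap.ker P.mkQ)) :=
    ext1Zero_X₁_of_forall_lifts hP.pureSES.1 (hY X hX) (h𝒳 X hX _ hP.pureSES)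
  rwa [P.ker_mkQ] at hker

end PureShortExact

section SkolemHull

variable (S : Type u) [Ring S] (G : Type u) {ι : Type} (F : ι → Type u)
  [∀ i, AddCommGroup (F i)] [∀ i, Module S (F i)] (A : Type u) [AddCommGroup A] [Module S A]

/-- Terms naming the elements of a submodule generated by `G` which contains, along with the
prescribed values on a submodule `L` of `F i`, all values of a chosen linear map on `F i` with
these values on `L` and with prescribed composite `F i → Y → A`. The type of terms does not depend
on the ambient module `Y`, hence it bounds the size of the submodule uniformly in `Y`. -/
inductive SkolemTerm : Type u
  | gen (a : G) : SkolemTerm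
  | zero : SkolemTerm
  | add (s t : SkolemTerm) : SkolemTerm
  | smul (c : S) (t : SkolemTerm) : SkolemTerm
  | sol (i : ι) (L : Submodule S (F i)) (l : L → SkolemTerm) (α : F i →ₗ[S] A) (v : F i) :
    SkolemTerm

variable {S G F A} {Y : Type*} [AddCommGroup Y] [Module S Y] (f : Y →ₗ[S] A) (g : G → Y)

open Classical in
/-- The element of `Y` named by a term; a term `sol i L l α v` whose constraints have no
solution names `0`. -/
noncomputable def SkolemTerm.eval : SkolemTerm S G F A → Y
  | gen a => g a
  | zero => 0
  | add s t => s.eval + t.eval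
  | smul c t => c • t.eval
  | sol i L l α v =>
    if h : ∃ x : F i →ₗ[S] Y, (∀ a : L, x a = (l a).eval) ∧ f ∘ₗ x = α then h.choose v else 0

variable (F) in
/-- The submodule of all elements named by terms. -/
def skolemHull : Submodule S Y where
  carrier := Set.range (SkolemTerm.eval (F := F) f g)
  zero_mem' := ⟨.zero, rfl⟩
  add_mem' := by rintro _ _ ⟨s, rfl⟩ ⟨t, rfl⟩; exact ⟨.add s t, rfl⟩
  smul_mem' := by rintro c _ ⟨t, rfl⟩; exact ⟨.smul c t, rfl⟩

variable {f g}

lemma exists_eq_on_and_mem_skolemHull {i : ι} (x : F i →ₗ[S] Y) :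
    ∃ x' : F i →ₗ[S] Y, (∀ v, x' v ∈ skolemHull F f g) ∧ f ∘ₗ x' = f ∘ₗ x ∧
      ∀ a, x a ∈ skolemHull F f g → x' a = x a := by
  choose l hl using fun a : (skolemHull F f g).comap x ↦ a.2
  have hsol : ∃ x' : F i →ₗ[S] Y, (∀ a : (skolemHull F f g).comap x, x' a = (l a).eval f g) ∧
      f ∘ₗ x' = f ∘ₗ x := ⟨x, fun a ↦ (hl a).symm, rfl⟩
  refine ⟨hsol.choose, fun v ↦ ⟨.sol i _ l (f ∘ₗ x) v, ?_⟩, hsol.choose_spec.2, fun a ha ↦ ?_⟩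
  · rw [SkolemTerm.eval, dif_pos hsol]
  · exact (hsol.choose_spec.1 ⟨a, ha⟩).trans (hl ⟨a, ha⟩)

variable (F f g) in
lemma range_linearCombination_eval :
    LinearMap.range (Finsupp.linearCombination S (SkolemTerm.eval (F := F) f g)) =
      skolemHull F f g :=
  (Finsupp.range_linearCombination S).trans (Submodule.span_eq (skolemHull F f g))

end SkolemHull

section PureHull

variable {S : Type u} [Ring S] {Y : Type*} [AddCommGroup Y] [Module S Y]

variable (S) in
/-- Terms naming the elements of a pure submodule generated by `G`. -/
abbrev PureTerm (G : Type u) : Type u :=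
  SkolemTerm S G (fun n : ℕ ↦ Fin n → S) PUnit.{u + 1}

variable (S) in
/-- A free module which maps onto a pure submodule containing any given `G`-indexed family. -/
abbrev PureFree (G : Type u) : Type u := PureTerm S G →₀ S

lemma isPure_skolemHull {G : Type u} (g : G → Y) :
    IsPure (skolemHull (fun n : ℕ ↦ Fin n → S) (0 : Y →ₗ[S] PUnit.{u + 1}) g) := by
  intro n K _ y hy
  obtain ⟨x, hx, -, hxy⟩ := exists_eq_on_and_mem_skolemHull
    (F := fun n : ℕ ↦ Fin n → S) (f := (0 : Y →ₗ[S] PUnit.{u + 1})) (g := g) y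
  exact ⟨x, hx, fun a ha ↦ hxy a (hy a ha)⟩

lemma exists_isPure_range {G : Type u} (g : G → Y) :
    ∃ p : PureFree S G →ₗ[S] Y,
      IsPure (LinearMap.range p) ∧ ∀ a, g a ∈ LinearMap.range p := by
  refine ⟨Finsupp.linearCombination S (SkolemTerm.eval 0 g), ?_, fun a ↦ ?_⟩ <;>
    rw [range_linearCombination_eval]
  · exact isPure_skolemHull g
  · exact ⟨.gen a, rfl⟩

end PureHull

section Reduced

variable {S : Type u} [Ring S] {Y A : Type u} [AddCommGroup Y] [Module S Y] [AddCommGroup A]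
  [Module S A]

variable (S A) in
/-- A type whose cardinality bounds that of any module `Y` with a purely reduced map `Y → A`. -/
abbrev ReducedTerm : Type u :=
  SkolemTerm S PEmpty.{u + 1} (fun _ : Unit ↦ PureFree S PUnit.{u + 1}) A

/-- A linear map is purely reduced if its kernel contains no nonzero pure submodule. -/
def IsPureReduced (f : Y →ₗ[S] A) : Prop :=
  ∀ P : Submodule S Y, IsPure P → P ≤ LinearMap.ker f → P = ⊥

/- Let `N` be the hull. If `N.mkQ y` were nonzero, it would lie in a small nonzero pure submodule
of `Y ⧸ N`, presented by a map `p` from a free module. Lifting `p` to `Y` and correcting the lift by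
a solution inside `N` with the same image in `A` yields a nonzero pure submodule of `ker f`. -/
lemma IsPureReduced.skolemHull_eq_top {f : Y →ₗ[S] A} (hf : IsPureReduced f) :
    skolemHull (fun _ : Unit ↦ PureFree S PUnit.{u + 1}) f PEmpty.elim = ⊤ := by
  set N := skolemHull (fun _ : Unit ↦ PureFree S PUnit.{u + 1}) f PEmpty.elim
  refine eq_top_iff.mpr fun y _ ↦ ?_
  obtain ⟨p, hp, hyp⟩ := exists_isPure_range (S := S) fun _ : PUnit.{u + 1} ↦ N.mkQ y
  obtain ⟨x, hx⟩ := Module.projective_lifting_property N.mkQ p N.mkQ_surjective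
  obtain ⟨x', hx'N, hfx', hx'x⟩ := exists_eq_on_and_mem_skolemHull
    (F := fun _ : Unit ↦ PureFree S PUnit.{u + 1}) (i := ()) (f := f) (g := PEmpty.elim) x
  have hd : N.mkQ ∘ₗ (x - x') = p := by
    rw [LinearMap.comp_sub, hx, sub_eq_self]
    exact LinearMap.ext fun v ↦ (Submodule.Quotient.mk_eq_zero N).mpr (hx'N v)
  have hker : LinearMap.ker (N.mkQ ∘ₗ (x - x')) ≤ LinearMap.ker (x - x') := by
    intro v hv
    rw [hd, ← hx] at hv
    rw [LinearMap.mem_ker, LinearMap.sub_apply,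
      hx'x v ((Submodule.Quotient.mk_eq_zero N).mp hv), sub_self]
  have hrange : LinearMap.range (x - x') = ⊥ :=
    hf _ (isPure_range_of_ker_comp_le _ N.mkQ hker (hd ▸ hp)) <| by
      rw [LinearMap.range_le_ker_iff, LinearMap.comp_sub, hfx', sub_self]
  have hp0 : p = 0 := by rw [← hd, LinearMap.range_eq_bot.mp hrange, LinearMap.comp_zero]
  obtain ⟨v, hv⟩ := hyp ⟨⟩
  rw [hp0] at hv
  exact (Submodule.Quotient.mk_eq_zero N).mp hv.symm

lemma IsPureReduced.mk_le {f : Y →ₗ[S] A} (hf : IsPureReduced f) :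
    Cardinal.mk Y ≤ Cardinal.mk (ReducedTerm S A) :=
  Cardinal.mk_le_of_surjective (f := SkolemTerm.eval f PEmpty.elim) fun y ↦
    hf.skolemHull_eq_top.ge (Submodule.mem_top (x := y))

lemma exists_isPureReduced_liftQ (f : Y →ₗ[S] A) :
    ∃ (P : Submodule S Y) (hP : P ≤ LinearMap.ker f), IsPure P ∧ IsPureReduced (P.liftQ f hP) := by
  obtain ⟨P, hmax⟩ := zorn_le₀ {P : Submodule S Y | IsPure P ∧ P ≤ LinearMap.ker f}
    fun c hc hchain ↦ by
      rcases c.eq_empty_or_nonempty with rfl | hne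
      · exact ⟨⊥, ⟨isPure_bot, bot_le⟩, by simp⟩
      · exact ⟨sSup c, ⟨isPure_sSup_of_directedOn hne hchain.directedOn fun P hP ↦ (hc hP).1,
          sSup_le fun P hP ↦ (hc hP).2⟩, fun P hP ↦ le_sSup hP⟩
  refine ⟨P, hmax.prop.2, hmax.prop.1, fun D hD hDker ↦ ?_⟩
  have hcomap : D.comap P.mkQ ≤ P := hmax.le_of_ge
    ⟨hmax.prop.1.comap_mkQ hD, fun y hy ↦ by simpa using hDker hy⟩
    fun y hy ↦ by simp [(Submodule.Quotient.mk_eq_zero P).mpr hy]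
  rw [← Submodule.map_comap_eq_of_surjective P.mkQ_surjective D, eq_bot_iff,
    Submodule.map_le_iff_le_comap]
  exact hcomap.trans P.ker_mkQ.ge

end Reduced

section Preenvelope

lemma isPreenvelope_piLift_of_solutionSet {𝒜 : Type u} [Category.{v} 𝒜] [Abelian 𝒜] (𝒳 : Set 𝒜)
    {A : 𝒜} {J : Type*} (Q : J → 𝒜) [HasProduct Q] (hQ : ∀ j, Q j ∈ rightPerp1 𝒳)
    (φ : ∀ j, A ⟶ Q j)
    (hφ : ∀ Y ∈ rightPerp1 𝒳, ∀ g : A ⟶ Y, ∃ (j : J) (ψ : Q j ⟶ Y), φ j ≫ ψ = g) :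
    IsPreenvelope (rightPerp1 𝒳) (Pi.lift φ) := by
  refine ⟨fun X hX ↦ ext1Zero_of_isLimit_discrete (limit.isLimit (Discrete.functor Q))
    fun j ↦ hQ j.as X hX, fun Y hY g ↦ ?_⟩
  obtain ⟨j, ψ, rfl⟩ := hφ Y hY g
  exact ⟨Pi.π Q j ≫ ψ, Pi.lift_π_assoc _ _ _⟩

variable {R : Type u} [Ring R] {𝒳 : Set (ModuleCat.{u} Rᵐᵒᵖ)}

lemma exists_factorization_through_quotient_pureFree (h𝒳 : ∀ X ∈ 𝒳, PureProjective X)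
    {A Y : ModuleCat.{u} Rᵐᵒᵖ} (hY : Y ∈ rightPerp1 𝒳) (g : A ⟶ Y) :
    ∃ (K : Submodule Rᵐᵒᵖ (PureFree Rᵐᵒᵖ A)) (φ : A ⟶ ModuleCat.of Rᵐᵒᵖ (PureFree Rᵐᵒᵖ A ⧸ K))
      (ψ : ModuleCat.of Rᵐᵒᵖ (PureFree Rᵐᵒᵖ A ⧸ K) ⟶ Y),
      ModuleCat.of Rᵐᵒᵖ (PureFree Rᵐᵒᵖ A ⧸ K) ∈ rightPerp1 𝒳 ∧ φ ≫ ψ = g := by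
  obtain ⟨p, hp, hgp⟩ := exists_isPure_range (S := Rᵐᵒᵖ) g.hom
  let e : ModuleCat.of Rᵐᵒᵖ (LinearMap.range p) ≅ ModuleCat.of Rᵐᵒᵖ (_ ⧸ LinearMap.ker p) :=
    p.quotKerEquivRange.symm.toModuleIso
  refine ⟨LinearMap.ker p, ModuleCat.ofHom (g.hom.codRestrict _ hgp) ≫ e.hom,
    e.inv ≫ ModuleCat.ofHom (LinearMap.range p).subtype,
    fun X hX ↦ ext1Zero_of_iso e (hp.mem_rightPerp1 h𝒳 hY X hX), ?_⟩
  rw [assoc, e.hom_inv_id_assoc]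
  rfl

theorem exists_isPreenvelope_rightPerp1 (h𝒳 : ∀ X ∈ 𝒳, PureProjective X)
    (A : ModuleCat.{u} Rᵐᵒᵖ) :
    ∃ (Y : ModuleCat.{u} Rᵐᵒᵖ) (j : A ⟶ Y), IsPreenvelope (rightPerp1 𝒳) j := by
  let J := Σ K : {K : Submodule Rᵐᵒᵖ (PureFree Rᵐᵒᵖ A) //
    ModuleCat.of Rᵐᵒᵖ (PureFree Rᵐᵒᵖ A ⧸ K) ∈ rightPerp1 𝒳},
      A ⟶ ModuleCat.of Rᵐᵒᵖ (PureFree Rᵐᵒᵖ A ⧸ K.1)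
  refine ⟨_, _, isPreenvelope_piLift_of_solutionSet 𝒳
    (fun j : J ↦ ModuleCat.of Rᵐᵒᵖ (PureFree Rᵐᵒᵖ A ⧸ j.1.1)) (fun j ↦ j.1.2) (fun j ↦ j.2)
    fun Y hY g ↦ ?_⟩
  obtain ⟨K, φ, ψ, hK, hφψ⟩ := exists_factorization_through_quotient_pureFree h𝒳 hY g
  exact ⟨⟨⟨K, hK⟩, φ⟩, ψ, hφψ⟩

end Preenvelope

section PseudoCoherent

variable {S : Type*} [Ring S] {M N : Type*} [AddCommGroup M] [Module S M] [AddCommGroup N]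
  [Module S N]

variable (S M) in
/-- Pseudo-coherence in the sense of Bourbaki: finitely generated submodules are finitely
presented. A ring is coherent if it is a pseudo-coherent module over itself. -/
def IsPseudoCoherent : Prop :=
  ∀ N : Submodule S M, N.FG → Module.FinitePresentation S N

lemma IsPseudoCoherent.of_injective (hN : IsPseudoCoherent S N) (f : M →ₗ[S] N)
    (hf : Function.Injective f) : IsPseudoCoherent S M := fun K hK ↦
  have := hN (K.map f) (hK.map f)
  .of_equiv (K.equivMapOfInjective f hf).symm

lemma IsPseudoCoherent.of_ker (φ : M →ₗ[S] N) (hN : IsPseudoCoherent S N)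
    (hker : IsPseudoCoherent S (LinearMap.ker φ)) : IsPseudoCoherent S M := by
  intro K hK
  have : Module.Finite S K := .of_fg hK
  have hrange : Module.FinitePresentation S (LinearMap.range (φ.domRestrict K)) :=
    hN _ (by rw [LinearMap.range_domRestrict]; exact hK.map φ)
  set ψ := (φ.domRestrict K).rangeRestrict
  have hψ : Function.Surjective ψ := LinearMap.surjective_rangeRestrict _
  have hkerψ : Module.FinitePresentation S (LinearMap.ker ψ) := by
    let i : LinearMap.ker ψ →ₗ[S] LinearMap.ker φ :=
      (K.subtype ∘ₗ (LinearMap.ker ψ).subtype).codRestrict _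
        fun a ↦ congrArg Subtype.val (LinearMap.mem_ker.mp a.2)
    have hi : Function.Injective i := fun a b hab ↦
      Subtype.ext (Subtype.ext (congrArg (LinearMap.ker φ).subtype hab))
    have : Module.Finite S (LinearMap.ker ψ) :=
      .of_fg (Module.FinitePresentation.fg_ker ψ hψ)
    have := hker (LinearMap.range i) (Module.Finite.iff_fg.mp inferInstance)
    exact .of_equiv (LinearEquiv.ofInjective i hi).symm
  exact Module.finitePresentation_of_ker ψ hψ

lemma IsPseudoCoherent.pi_fin (hM : IsPseudoCoherent S M) (n : ℕ) :
    IsPseudoCoherent S (Fin n → M) := by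
  induction n with
  | zero => exact hM.of_injective 0 (Function.injective_of_subsingleton _)
  | succ n ih =>
    refine .of_ker (LinearMap.proj 0) hM <| ih.of_injective
      (LinearMap.funLeft S M Fin.succ ∘ₗ (LinearMap.ker _).subtype) fun v w hvw ↦ ?_
    refine Subtype.ext (funext fun i ↦ Fin.cases ?_ (congrFun hvw) i)
    exact (LinearMap.mem_ker.mp v.2).trans (LinearMap.mem_ker.mp w.2).symm

lemma isPseudoCoherent_mulOpposite {R : Type*} [Ring R] (hR : IsPseudoCoherent Rᵐᵒᵖ R) :
    IsPseudoCoherent Rᵐᵒᵖ Rᵐᵒᵖ :=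
  hR.of_injective (LinearMap.toSpanSingleton Rᵐᵒᵖ R 1) fun a b hab ↦ by
    simpa [LinearMap.toSpanSingleton_apply] using hab

variable (S) in
lemma exists_surjective_fin_of_finitePresentation (M : Type*) [AddCommGroup M] [Module S M]
    [Module.FinitePresentation S M] :
    ∃ (n : ℕ) (p : (Fin n → S) →ₗ[S] M), Function.Surjective p ∧ (LinearMap.ker p).FG := by
  obtain ⟨n, K, e, hK⟩ := Module.FinitePresentation.exists_fin S M
  exact ⟨n, e.symm.toLinearMap ∘ₗ K.mkQ, e.symm.surjective.comp K.mkQ_surjective,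
    by rwa [LinearEquiv.ker_comp, K.ker_mkQ]⟩

lemma exists_surjective_fin_of_isPseudoCoherent (hS : IsPseudoCoherent S S) (M : Type*)
    [AddCommGroup M] [Module S M] [Module.FinitePresentation S M] :
    ∃ (n : ℕ) (p : (Fin n → S) →ₗ[S] M), Function.Surjective p ∧
      Module.FinitePresentation S (LinearMap.ker p) := by
  obtain ⟨n, p, hp, hker⟩ := exists_surjective_fin_of_finitePresentation S M
  exact ⟨n, p, hp, hS.pi_fin n _ hker⟩

end PseudoCoherent

section FilteredColimit

variable {S : Type u} [Ring S] {J : Type u} [SmallCategory J]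
  {G : J ⥤ ModuleCat.{u} S}

lemma cocone_ι_map_apply (c : Cocone G) {i j : J} (f : i ⟶ j) (x : G.obj i) :
    (c.ι.app j).hom ((G.map f).hom x) = (c.ι.app i).hom x :=
  congrArg (fun φ ↦ φ.hom x) (c.w f)

variable [IsFiltered J] {c : Cocone G}

open Classical in
lemma exists_factor_of_fin (hc : IsColimit c) {n : ℕ} (h : (Fin n → S) →ₗ[S] c.pt) :
    ∃ (j : J) (k : (Fin n → S) →ₗ[S] G.obj j), (c.ι.app j).hom ∘ₗ k = h := by
  choose j y hy using fun i : Fin n ↦ Concrete.isColimit_exists_rep G hc (h (Pi.single i 1))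
  obtain ⟨l, hl⟩ := IsFiltered.sup_objs_exists (Finset.univ.image j)
  let f (i : Fin n) : j i ⟶ l := (hl (Finset.mem_image_of_mem j (Finset.mem_univ i))).some
  refine ⟨l, Fintype.linearCombination S fun i ↦ (G.map (f i)).hom (y i), ?_⟩
  refine LinearMap.pi_ext' fun i ↦ LinearMap.ext_ring ?_
  simpa [cocone_ι_map_apply] using hy i

lemma exists_map_eq_zero_of_fg (hc : IsColimit c) {M : Type*} [AddCommGroup M] [Module S M]
    {j : J} (k : M →ₗ[S] G.obj j) (K : Submodule S M) (hK : K.FG)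
    (hk : K ≤ LinearMap.ker ((c.ι.app j).hom ∘ₗ k)) :
    ∃ (l : J) (f : j ⟶ l), K ≤ LinearMap.ker ((G.map f).hom ∘ₗ k) := by
  induction K, hK using Submodule.fg_induction with
  | singleton x =>
    rw [Submodule.span_singleton_le_iff_mem] at hk
    obtain ⟨l, f, g, hfg⟩ := Concrete.isColimit_exists_of_rep_eq.{u} G hc (k x) (0 : G.obj j)
      ((LinearMap.mem_ker.mp hk).trans (map_zero _).symm)
    exact ⟨l, f, (Submodule.span_singleton_le_iff_mem _ _).mpr (hfg.trans (map_zero _))⟩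
  | sup K₁ K₂ _ _ ih₁ ih₂ =>
    obtain ⟨l₁, f₁, hf₁⟩ := ih₁ (le_sup_left.trans hk)
    obtain ⟨l₂, f₂, hf₂⟩ := ih₂ (le_sup_right.trans hk)
    obtain ⟨l, g₁, g₂, hg⟩ := IsFiltered.span f₁ f₂
    refine ⟨l, f₁ ≫ g₁, sup_le ?_ (hg ▸ ?_)⟩ <;>
      rw [G.map_comp, ModuleCat.hom_comp, LinearMap.comp_assoc]
    · exact hf₁.trans (LinearMap.ker_le_ker_comp _ _)
    · exact hf₂.trans (LinearMap.ker_le_ker_comp _ _)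

lemma exists_factor_of_finitePresentation (hc : IsColimit c) {M : ModuleCat.{u} S}
    [Module.FinitePresentation S M] (h : M ⟶ c.pt) :
    ∃ (j : J) (k : M ⟶ G.obj j), k ≫ c.ι.app j = h := by
  obtain ⟨n, p, hp, hker⟩ := exists_surjective_fin_of_finitePresentation S M
  obtain ⟨i, k, hk⟩ := exists_factor_of_fin hc (h.hom ∘ₗ p)
  obtain ⟨j, f, hf⟩ := exists_map_eq_zero_of_fg hc k _ hker
    (hk ▸ LinearMap.ker_le_ker_comp p h.hom)
  let e := p.quotKerEquivOfSurjective hp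
  refine ⟨j, ModuleCat.ofHom ((LinearMap.ker p).liftQ _ hf ∘ₗ e.symm.toLinearMap), ?_⟩
  ext m
  obtain ⟨v, rfl⟩ := hp m
  have he : e.symm (p v) = (LinearMap.ker p).mkQ v := e.symm_apply_eq.mpr rfl
  simpa [he, cocone_ι_map_apply] using LinearMap.congr_fun hk v

end FilteredColimit

section ClosureUnderCoherence

variable {S : Type u} [Ring S] {𝒳 : Set (ModuleCat.{u} S)}

lemma mem_rightPerp1_of_forall_finitePresentation_factors (hS : IsPseudoCoherent S S)
    (h𝒳 : ∀ X ∈ 𝒳, Module.FinitePresentation S X) {N : ModuleCat.{u} S}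
    (hN : ∀ (M : ModuleCat.{u} S) [Module.FinitePresentation S M] (h : M ⟶ N),
      ∃ (N' : ModuleCat.{u} S) (k : M ⟶ N') (g : N' ⟶ N), k ≫ g = h ∧ N' ∈ rightPerp1 𝒳) :
    N ∈ rightPerp1 𝒳 := by
  intro X hX
  have := h𝒳 X hX
  obtain ⟨n, p, hp, hker⟩ := exists_surjective_fin_of_isPseudoCoherent hS X
  have : Projective p.shortComplexKer.X₂ :=
    (IsProjective.iff_projective (R := S) (Fin n → S)).mp inferInstance
  refine ext1Zero_of_forall_factors (LinearMap.shortExact_shortComplexKer hp) fun h ↦ ?_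
  obtain ⟨N', k, g, hkg, hN'⟩ := hN (ModuleCat.of S (LinearMap.ker p)) h
  exact ⟨N', k, g, hkg, hN' X hX⟩

lemma IsPure.quotient_mem_rightPerp1 (hS : IsPseudoCoherent S S)
    (h𝒳 : ∀ X ∈ 𝒳, Module.FinitePresentation S X) {Y : Type u} [AddCommGroup Y] [Module S Y]
    {P : Submodule S Y} (hP : IsPure P) (hY : ModuleCat.of S Y ∈ rightPerp1 𝒳) :
    ModuleCat.of S (Y ⧸ P) ∈ rightPerp1 𝒳 := by
  refine mem_rightPerp1_of_forall_finitePresentation_factors hS h𝒳 fun M _ h ↦ ?_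
  obtain ⟨ψ, hψ⟩ := hP.exists_lift h.hom
  exact ⟨_, ModuleCat.ofHom ψ, ModuleCat.ofHom P.mkQ, ModuleCat.hom_ext hψ, hY⟩

lemma mem_rightPerp1_of_isColimit (hS : IsPseudoCoherent S S)
    (h𝒳 : ∀ X ∈ 𝒳, Module.FinitePresentation S X) {J : Type u} [SmallCategory J] [IsFiltered J]
    {G : J ⥤ ModuleCat.{u} S} {c : Cocone G} (hc : IsColimit c)
    (hG : ∀ j, G.obj j ∈ rightPerp1 𝒳) : c.pt ∈ rightPerp1 𝒳 := by
  refine mem_rightPerp1_of_forall_finitePresentation_factors hS h𝒳 fun M _ h ↦ ?_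
  obtain ⟨j, k, hk⟩ := exists_factor_of_finitePresentation hc h
  exact ⟨_, k, c.ι.app j, hk, hG j⟩

end ClosureUnderCoherence

section LongChains

variable {κ : Cardinal.{u}} [Fact κ.IsRegular] {J : Type u} [LinearOrder J]
  [IsCardinalFiltered J κ]

lemma exists_forall_le_of_hasCardinalLT {K : Type*} (hK : HasCardinalLT K κ) (s : K → J) :
    ∃ j, ∀ k, s k ≤ j :=
  ⟨IsCardinalFiltered.max s hK, fun k ↦ leOfHom (IsCardinalFiltered.toMax s hK k)⟩

lemma exists_isSuccLimit_of_forall_lt [WellFoundedLT J] (hκ : Cardinal.aleph0 < κ) {b : J → J}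
    (hb : ∀ i, i < b i) (i₀ : J) :
    ∃ δ, i₀ ≤ δ ∧ Order.IsSuccLimit δ ∧ ∀ i < δ, ∃ i', i ≤ i' ∧ b i' ≤ δ := by
  have hsucc (n : ℕ) : b^[n + 1] i₀ = b (b^[n] i₀) := Function.iterate_succ_apply' b n i₀
  obtain ⟨j, hj⟩ := exists_forall_le_of_hasCardinalLT (κ := κ) (K := ℕ)
    (by simpa [HasCardinalLT] using hκ) fun n ↦ b^[n] i₀
  obtain ⟨δ, hδ, hmin⟩ := WellFounded.has_min (wellFounded_lt (α := J))
    (upperBounds (Set.range fun n ↦ b^[n] i₀)) ⟨j, Set.forall_mem_range.mpr hj⟩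
  rw [mem_upperBounds, Set.forall_mem_range] at hδ
  have hlub : IsLUB (Set.range fun n ↦ b^[n] i₀) δ :=
    ⟨Set.forall_mem_range.mpr hδ, fun i hi ↦ not_lt.mp (hmin i hi)⟩
  have hlt (n : ℕ) : b^[n] i₀ < δ := (hb _).trans_le (hsucc n ▸ hδ (n + 1))
  refine ⟨δ, hδ 0, hlub.isSuccLimit_of_notMem (Set.range_nonempty _) ?_, fun i hi ↦ ?_⟩
  · rintro ⟨n, hn⟩
    exact (hlt n).ne hn
  · obtain ⟨_, ⟨n, rfl⟩, hn, -⟩ := hlub.exists_between hi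
    exact ⟨_, hn.le, hsucc n ▸ hδ (n + 1)⟩

variable {D : J ⥤ Type u} {c : Cocone D}

lemma exists_map_eq_of_ι_eq (hc : IsColimit c) {i : J} (hi : HasCardinalLT (D.obj i) κ) :
    ∃ (j : J) (hij : i ≤ j), ∀ x y : D.obj i, c.ι.app i x = c.ι.app i y →
      D.map (homOfLE hij) x = D.map (homOfLE hij) y := by
  have := isFiltered_of_isCardinalFiltered J κ
  let K := {p : D.obj i × D.obj i // c.ι.app i p.1 = c.ι.app i p.2}
  have hK : HasCardinalLT K κ :=
    (hasCardinalLT_prod (Cardinal.IsRegular.aleph0_le Fact.out) hi hi).of_injective _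
      Subtype.val_injective
  choose j f hf using fun p : K ↦ (Types.FilteredColimit.isColimit_eq_iff' hc p.1.1 p.1.2).mp p.2
  obtain ⟨j₀, hj₀⟩ := exists_forall_le_of_hasCardinalLT hK j
  refine ⟨max i j₀, le_max_left _ _, fun x y hxy ↦ ?_⟩
  let p : K := ⟨(x, y), hxy⟩
  have hcomp : homOfLE (le_max_left i j₀) = f p ≫ homOfLE ((hj₀ p).trans (le_max_right _ _)) :=
    Subsingleton.elim _ _
  rw [hcomp, D.map_comp, ConcreteCategory.comp_apply, ConcreteCategory.comp_apply, hf p]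

lemma exists_forall_surjective_ι (hc : IsColimit c) (hpt : HasCardinalLT c.pt κ) :
    ∃ i, ∀ j, i ≤ j → Function.Surjective (c.ι.app j) := by
  choose i x hx using Types.jointly_surjective_of_isColimit hc
  obtain ⟨i₀, hi₀⟩ := exists_forall_le_of_hasCardinalLT hpt i
  refine ⟨i₀, fun j hj y ↦ ⟨D.map (homOfLE ((hi₀ y).trans hj)) (x y), ?_⟩⟩
  rw [← ConcreteCategory.comp_apply, c.w, hx]

lemma exists_map_eq_and_map_eq_of_isSuccLimit {J : Type u} [LinearOrder J] (D : J ⥤ Type u)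
    [D.IsWellOrderContinuous] {δ : J} (hδ : Order.IsSuccLimit δ) (x y : D.obj δ) :
    ∃ (i : J) (hi : i < δ) (x' y' : D.obj i),
      D.map (homOfLE hi.le) x' = x ∧ D.map (homOfLE hi.le) y' = y := by
  obtain ⟨i, hi⟩ := not_isMin_iff.mp hδ.not_isMin
  have : Nonempty (Set.Iio δ) := ⟨i, hi⟩
  obtain ⟨i, h⟩ := Types.FilteredColimit.jointly_surjective_of_isColimit₂
    (D.isColimitOfIsWellOrderContinuous δ hδ) x y
  exact ⟨i, i.2, h⟩

/- Two elements identified in the colimit are already identified at a bounded later stage, so a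
limit stage closed under the bounds `b` injects into the colimit. -/
lemma exists_injective_ι [SuccOrder J] [WellFoundedLT J] [NoMaxOrder J] [D.IsWellOrderContinuous]
    (hκ : Cardinal.aleph0 < κ) (hc : IsColimit c)
    (hD : ∀ j, HasCardinalLT (D.obj (Order.succ j)) κ) (i₀ : J) :
    ∃ δ, i₀ ≤ δ ∧ Function.Injective (c.ι.app δ) := by
  choose b hb hmap using fun i ↦ exists_map_eq_of_ι_eq hc (hD i)
  obtain ⟨δ, hi₀δ, hδ, hclosed⟩ :=
    exists_isSuccLimit_of_forall_lt hκ (fun i ↦ (Order.lt_succ i).trans_le (hb i)) i₀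
  refine ⟨δ, hi₀δ, fun x y hxy ↦ ?_⟩
  obtain ⟨i, hi, x, y, rfl, rfl⟩ := exists_map_eq_and_map_eq_of_isSuccLimit D hδ x y
  obtain ⟨i', hii', hi'⟩ := hclosed i hi
  have hle : i ≤ Order.succ i' := hii'.trans (Order.le_succ i')
  have hcomp : homOfLE hi.le = homOfLE hle ≫ homOfLE (hb i') ≫ homOfLE hi' :=
    Subsingleton.elim _ _
  have hstage := hmap i' (D.map (homOfLE hle) x) (D.map (homOfLE hle) y) <| by
    simpa only [← ConcreteCategory.comp_apply, c.w] using hxy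
  simp only [hcomp, D.map_comp, ConcreteCategory.comp_apply, hstage]

end LongChains

section MaximalObject

variable {C : Type*} [Category* C]

lemma injective_map_of_injective_map_comp {U : C ⥤ Type u} {X Y Z : C} {f : X ⟶ Y} {g : Y ⟶ Z}
    (h : Function.Injective (U.map (f ≫ g))) : Function.Injective (U.map f) := by
  rw [U.map_comp, types_comp] at h
  exact h.of_comp

lemma hasIterationOfShape_of_hasFilteredColimits [HasFilteredColimitsOfSize.{u, u} C]
    (J : Type u) [LinearOrder J] [Nonempty J] : HasIterationOfShape J C where
  hasColimitsOfShape_of_isSuccLimit j hj := by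
    obtain ⟨i, hi⟩ := not_isMin_iff.mp hj.not_isMin
    have : Nonempty (Set.Iio j) := ⟨i, hi⟩
    infer_instance

lemma preservesWellOrderContinuousOfShape_of_preservesFilteredColimits (U : C ⥤ Type u)
    [PreservesFilteredColimitsOfSize.{u, u} U] (J : Type u) [LinearOrder J] :
    PreservesWellOrderContinuousOfShape J U where
  preservesColimitsOfShape j hj := by
    obtain ⟨i, hi⟩ := not_isMin_iff.mp hj.not_isMin
    have : Nonempty (Set.Iio j) := ⟨i, hi⟩
    infer_instance

/-- Every morphism out of `Z` becomes injective under the functor `U`, which plays the role of the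
underlying set. -/
def MapsOutInjective (U : C ⥤ Type u) (Z : C) : Prop :=
  ∀ ⦃Z' : C⦄ (f : Z ⟶ Z'), Function.Injective (U.map f)

/-- All morphisms out of `Z` are injective, and those to objects with the same property are
bijective. For modules over `A` with source in a class, such an object is a cover of `A`. -/
structure IsMaximalObject (U : C ⥤ Type u) (Z : C) : Prop where
  mapsOutInjective : MapsOutInjective U Z
  bijective : ∀ ⦃Z' : C⦄, MapsOutInjective U Z' → ∀ f : Z ⟶ Z', Function.Bijective (U.map f)

section Iteration

variable (Φ : SmallObject.SuccStruct C) {J : Type u} [LinearOrder J] [SuccOrder J]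
  [OrderBot J] [WellFoundedLT J] [NoMaxOrder J] [HasIterationOfShape J C]

lemma exists_toSucc_comp_eq_ι (j : J) :
    ∃ m : Φ.succ ((Φ.iterationFunctor J).obj j) ⟶ (Φ.iterationCocone J).pt,
      Φ.toSucc _ ≫ m = (Φ.iterationCocone J).ι.app j := by
  refine ⟨(Φ.iterationFunctorObjSuccIso j (not_isMax j)).inv ≫
    (Φ.iterationCocone J).ι.app (Order.succ j), ?_⟩
  rw [← Φ.iterationFunctor_map_succ_assoc j (not_isMax j), Cocone.w]

variable {U : C ⥤ Type u} [PreservesFilteredColimitsOfSize.{u, u} U] {κ : Cardinal.{u}}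
  [Fact κ.IsRegular] [IsCardinalFiltered J κ]

lemma exists_injective_map_iterationCocone_ι (hκ : Cardinal.aleph0 < κ)
    (hΦ : ∀ Z, HasCardinalLT (U.obj (Φ.succ Z)) κ) (i : J) :
    ∃ j, i ≤ j ∧ Function.Injective (U.map ((Φ.iterationCocone J).ι.app j)) := by
  have := preservesWellOrderContinuousOfShape_of_preservesFilteredColimits U J
  refine exists_injective_ι (D := Φ.iterationFunctor J ⋙ U) hκ
    (isColimitOfPreserves U (Φ.isColimitIterationCocone J)) (fun j ↦ ?_) i
  exact (hasCardinalLT_iff_of_equiv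
    (U.mapIso (Φ.iterationFunctorObjSuccIso j (not_isMax j))).toEquiv κ).mpr (hΦ _)

lemma mapsOutInjective_iterationCocone_pt (hΦ : ∀ Z, MapsOutInjective U (Φ.succ Z)) :
    MapsOutInjective U (Φ.iterationCocone J).pt := by
  intro Z' f x y hxy
  obtain ⟨j, x, y, rfl, rfl⟩ := Types.FilteredColimit.jointly_surjective_of_isColimit₂
    (isColimitOfPreserves U (Φ.isColimitIterationCocone J)) x y
  obtain ⟨m, hm⟩ := exists_toSucc_comp_eq_ι Φ j
  rw [Functor.mapCocone_ι_app, ← hm, U.map_comp] at hxy ⊢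
  exact congrArg (U.map m) (hΦ _ (m ≫ f) (by rwa [U.map_comp]))

lemma exists_bijective_map_toSucc (hκ : Cardinal.aleph0 < κ)
    (hsmall : ∀ Z : C, ∃ (Z' : C) (_ : Z ⟶ Z'), HasCardinalLT (U.obj Z') κ)
    (hΦ : ∀ Z, MapsOutInjective U (Φ.succ Z)) :
    ∃ j : J, Function.Bijective (U.map (Φ.toSucc ((Φ.iterationFunctor J).obj j))) := by
  have hcard (Z : C) (hZ : MapsOutInjective U Z) : HasCardinalLT (U.obj Z) κ := by
    obtain ⟨Z', f, hZ'⟩ := hsmall Z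
    exact hZ'.of_injective _ (hZ f)
  obtain ⟨i, hi⟩ := exists_forall_surjective_ι
    (isColimitOfPreserves U (Φ.isColimitIterationCocone J))
    (hcard _ (mapsOutInjective_iterationCocone_pt Φ hΦ))
  obtain ⟨j, hij, hj⟩ :=
    exists_injective_map_iterationCocone_ι Φ hκ (fun Z ↦ hcard _ (hΦ Z)) i
  obtain ⟨m, hm⟩ := exists_toSucc_comp_eq_ι Φ j
  have hbij : Function.Bijective (U.map m ∘ U.map (Φ.toSucc _)) := by
    rw [← types_comp, ← U.map_comp, hm]
    exact ⟨hj, hi j hij⟩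
  exact ⟨j, (Function.Bijective.of_comp_iff' ⟨hΦ _ m, hbij.surjective.of_comp⟩ _).mp hbij⟩

end Iteration

variable {U : C ⥤ Type u} [HasFilteredColimitsOfSize.{u, u} C]
  [PreservesFilteredColimitsOfSize.{u, u} U] {κ : Cardinal.{u}} [Fact κ.IsRegular]

theorem exists_mapsOutInjective (hκ : Cardinal.aleph0 < κ)
    (hsmall : ∀ Z : C, ∃ (Z' : C) (_ : Z ⟶ Z'), HasCardinalLT (U.obj Z') κ) (X₀ : C) :
    ∃ (Z : C) (_ : X₀ ⟶ Z), MapsOutInjective U Z := by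
  have hstep (Z : C) : ∃ (Z' : C) (f : Z ⟶ Z'), HasCardinalLT (U.obj Z') κ ∧
      (Function.Injective (U.map f) → MapsOutInjective U Z) := by
    by_cases hZ : MapsOutInjective U Z
    · obtain ⟨Z', f, hZ'⟩ := hsmall Z
      exact ⟨Z', f, hZ', fun _ ↦ hZ⟩
    · simp only [MapsOutInjective, not_forall] at hZ
      obtain ⟨Z', f, hf⟩ := hZ
      obtain ⟨Z'', g, hZ''⟩ := hsmall Z'
      exact ⟨Z'', f ≫ g, hZ'', fun hfg ↦ absurd (injective_map_of_injective_map_comp hfg) hf⟩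
  choose succ toSucc hsucc hinj using hstep
  have := IsCardinalFiltered.nonempty κ.ord.ToType κ
  let _ := WellFoundedLT.toOrderBot κ.ord.ToType
  have := Cardinal.noMaxOrder hκ.le
  have := hasIterationOfShape_of_hasFilteredColimits (C := C) κ.ord.ToType
  let Φ : SmallObject.SuccStruct C := ⟨X₀, succ, toSucc⟩
  obtain ⟨j, -, hj⟩ := exists_injective_map_iterationCocone_ι (J := κ.ord.ToType) Φ hκ hsucc ⊥
  obtain ⟨m, hm⟩ := exists_toSucc_comp_eq_ι Φ j
  refine ⟨_, (Φ.ιIterationFunctor _).app j, hinj _ ?_⟩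
  exact injective_map_of_injective_map_comp (hm ▸ hj)

theorem exists_isMaximalObject (hκ : Cardinal.aleph0 < κ)
    (hsmall : ∀ Z : C, ∃ (Z' : C) (_ : Z ⟶ Z'), HasCardinalLT (U.obj Z') κ) (X₀ : C) :
    ∃ (Z : C) (_ : X₀ ⟶ Z), IsMaximalObject U Z := by
  have hstep (Z : C) : ∃ (Z' : C) (f : Z ⟶ Z'), MapsOutInjective U Z' ∧
      (Function.Bijective (U.map f) → IsMaximalObject U Z) := by
    by_cases hZ : ∀ ⦃Z' : C⦄, MapsOutInjective U Z' → ∀ f : Z ⟶ Z', Function.Bijective (U.map f)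
    · obtain ⟨Z₁, f₁, hZ₁⟩ := exists_mapsOutInjective hκ hsmall Z
      refine ⟨Z₁, f₁, hZ₁, fun _ ↦ ⟨fun Z' f ↦ ?_, hZ⟩⟩
      obtain ⟨Z'', g, hZ''⟩ := exists_mapsOutInjective hκ hsmall Z'
      exact injective_map_of_injective_map_comp (hZ hZ'' (f ≫ g)).injective
    · simp only [not_forall] at hZ
      obtain ⟨Z', hZ', f, hf⟩ := hZ
      exact ⟨Z', f, hZ', fun h ↦ absurd h hf⟩
  choose succ toSucc hsucc hbij using hstep
  have := IsCardinalFiltered.nonempty κ.ord.ToType κ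
  let _ := WellFoundedLT.toOrderBot κ.ord.ToType
  have := Cardinal.noMaxOrder hκ.le
  have := hasIterationOfShape_of_hasFilteredColimits (C := C) κ.ord.ToType
  let Φ : SmallObject.SuccStruct C := ⟨X₀, succ, toSucc⟩
  obtain ⟨j, hj⟩ := exists_bijective_map_toSucc (J := κ.ord.ToType) Φ hκ hsmall hsucc
  exact ⟨_, (Φ.ιIterationFunctor _).app j, hbij _ hj⟩

end MaximalObject

section Cover

/-- The underlying set functor on the category of morphisms `Y ⟶ A` with `Y` in the class `P`,
where the underlying sets of objects of `𝒜` are given by `V`. -/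
abbrev overForget {𝒜 : Type*} [Category* 𝒜] (V : 𝒜 ⥤ Type u) (P : ObjectProperty 𝒜) (A : 𝒜) :
    CostructuredArrow P.ι A ⥤ Type u :=
  CostructuredArrow.proj P.ι A ⋙ P.ι ⋙ V

section MaximalImpliesCover

variable {𝒜 : Type*} [Category* 𝒜] {V : 𝒜 ⥤ Type u} [V.ReflectsIsomorphisms]
  {P : ObjectProperty 𝒜} {A : 𝒜} {Y : CostructuredArrow P.ι A}

lemma isIso_of_bijective_map_overForget {Z : CostructuredArrow P.ι A} {φ : Y ⟶ Z}
    (h : Function.Bijective ((overForget V P A).map φ)) : IsIso (P.ι.map φ.left) := by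
  have : IsIso (V.map (P.ι.map φ.left)) := (isIso_iff_bijective _).mpr h
  exact isIso_of_reflects_iso _ V

lemma isPrecover_of_isMaximalObject [HasBinaryCoproducts 𝒜]
    (hcoprod : ∀ X X' : 𝒜, P X → P X' → P (X ⨿ X'))
    (hout : ∀ Z, ∃ (M : CostructuredArrow P.ι A) (_ : Z ⟶ M),
      MapsOutInjective (overForget V P A) M)
    (hY : IsMaximalObject (overForget V P A) Y) : IsPrecover {N | P N} Y.hom := by
  refine ⟨Y.left.property, fun X hX g ↦ ?_⟩
  let T : CostructuredArrow P.ι A := CostructuredArrow.mk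
    (Y := ⟨Y.left.obj ⨿ X, hcoprod _ _ Y.left.property hX⟩) (by exact coprod.desc Y.hom g)
  let i : Y ⟶ T :=
    CostructuredArrow.homMk (ObjectProperty.homMk coprod.inl) (by exact coprod.inl_desc _ _)
  obtain ⟨M, k, hM⟩ := hout T
  have := isIso_of_bijective_map_overForget (hY.bijective hM (i ≫ k))
  refine ⟨coprod.inr ≫ P.ι.map k.left ≫ inv (P.ι.map (i ≫ k).left), ?_⟩
  have hinv : inv (P.ι.map (i ≫ k).left) ≫ Y.hom = M.hom := by
    rw [IsIso.inv_comp_eq, CostructuredArrow.w]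
  have hk : P.ι.map k.left ≫ M.hom = coprod.desc Y.hom g := CostructuredArrow.w k
  rw [assoc, assoc, hinv, hk, coprod.inr_desc]

lemma isCover_of_isMaximalObject [HasBinaryCoproducts 𝒜]
    (hcoprod : ∀ X X' : 𝒜, P X → P X' → P (X ⨿ X'))
    (hout : ∀ Z, ∃ (M : CostructuredArrow P.ι A) (_ : Z ⟶ M),
      MapsOutInjective (overForget V P A) M)
    (hY : IsMaximalObject (overForget V P A) Y) : IsCover {N | P N} Y.hom := by
  refine ⟨isPrecover_of_isMaximalObject hcoprod hout hY, fun h hh ↦ ?_⟩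
  let φ : Y ⟶ Y := CostructuredArrow.homMk (ObjectProperty.homMk h) hh
  exact isIso_of_bijective_map_overForget (hY.bijective hY.mapsOutInjective φ)

end MaximalImpliesCover

variable {S : Type u} [Ring S]

lemma exists_hom_hasCardinalLT {P : ObjectProperty (ModuleCat.{u} S)}
    (hP : ∀ (Y : ModuleCat.{u} S) (N : Submodule S Y), P Y → IsPure N → P (ModuleCat.of S (Y ⧸ N)))
    {A : ModuleCat.{u} S} {κ : Cardinal.{u}} (hκ : Cardinal.mk (ReducedTerm S A) < κ)
    (Z : CostructuredArrow P.ι A) :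
    ∃ (Z' : CostructuredArrow P.ι A) (_ : Z ⟶ Z'),
      HasCardinalLT ((overForget (forget _) P A).obj Z') κ := by
  let f : Z.left.obj ⟶ A := Z.hom
  obtain ⟨N, hN, hpure, hred⟩ := exists_isPureReduced_liftQ f.hom
  let Z' : CostructuredArrow P.ι A := CostructuredArrow.mk
    (Y := ⟨ModuleCat.of S (Z.left.obj ⧸ N), hP _ N Z.left.property hpure⟩)
    (ModuleCat.ofHom (N.liftQ f.hom hN))
  refine ⟨Z', CostructuredArrow.homMk (ObjectProperty.homMk (ModuleCat.ofHom N.mkQ)) rfl, ?_⟩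
  exact (hasCardinalLT_iff_cardinal_mk_lt _ _).mpr (hred.mk_le.trans_lt hκ)

theorem exists_isCover_of_isPure_quotient {P : ObjectProperty (ModuleCat.{u} S)} [P.ContainsZero]
    (hcoprod : ∀ X X' : ModuleCat.{u} S, P X → P X' → P (X ⨿ X'))
    (hP : ∀ (Y : ModuleCat.{u} S) (N : Submodule S Y), P Y → IsPure N → P (ModuleCat.of S (Y ⧸ N)))
    (hfilt : ∀ (J : Type u) [SmallCategory J] [IsFiltered J], P.IsClosedUnderColimitsOfShape J)
    (A : ModuleCat.{u} S) : ∃ (Y : ModuleCat.{u} S) (f : Y ⟶ A), IsCover {N | P N} f := by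
  let κ₀ := max (Cardinal.mk (ReducedTerm S A)) Cardinal.aleph0
  have : Fact (Order.succ κ₀).IsRegular := ⟨Cardinal.isRegular_succ (le_max_right _ _)⟩
  have hκ : Cardinal.aleph0 < Order.succ κ₀ := Order.lt_succ_of_le (le_max_right _ _)
  have hsmall := exists_hom_hasCardinalLT hP (A := A) (κ := Order.succ κ₀)
    (Order.lt_succ_of_le (le_max_left _ _))
  have : HasFilteredColimitsOfSize.{u, u} (CostructuredArrow P.ι A) := ⟨fun J _ _ ↦ inferInstance⟩
  have : PreservesFilteredColimitsOfSize.{u, u} (overForget (forget _) P A) :=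
    ⟨fun J _ _ ↦ inferInstance⟩
  obtain ⟨O, -, hPO⟩ := P.exists_prop_of_containsZero
  obtain ⟨Y, -, hY⟩ := exists_isMaximalObject hκ hsmall
    (CostructuredArrow.mk (Y := ⟨O, hPO⟩) (by exact (0 : O ⟶ A)))
  exact ⟨_, Y.hom, isCover_of_isMaximalObject hcoprod (exists_mapsOutInjective hκ hsmall) hY⟩

theorem exists_isCover_rightPerp1 (hS : IsPseudoCoherent S S) {𝒳 : Set (ModuleCat.{u} S)}
    (h𝒳 : ∀ X ∈ 𝒳, Module.FinitePresentation S X) (A : ModuleCat.{u} S) :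
    ∃ (Y : ModuleCat.{u} S) (f : Y ⟶ A), IsCover (rightPerp1 𝒳) f := by
  let P : ObjectProperty (ModuleCat.{u} S) := fun N ↦ N ∈ rightPerp1 𝒳
  have : P.ContainsZero :=
    ⟨_, ModuleCat.isZero_of_subsingleton (ModuleCat.of S PUnit.{u + 1}), fun X _ ↦
      ext1Zero_of_isZero X (ModuleCat.isZero_of_subsingleton _)⟩
  exact exists_isCover_of_isPure_quotient (P := P)
    (fun _ _ hX hX' Z hZ ↦ ext1Zero_coprod (hX Z hZ) (hX' Z hZ))
    (fun _ _ hY hN ↦ hN.quotient_mem_rightPerp1 hS h𝒳 hY)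
    (fun J _ _ ↦ ⟨fun N ⟨h⟩ ↦ mem_rightPerp1_of_isColimit hS h𝒳 h.isColimit h.prop_diag_obj⟩) A

end Cover

end PerpCover

open ExactPaper CategoryTheory Limits in
/-- **Corollary 4.5(1)**: if `𝒳` is a class of pure projective right `R`-modules, then
`𝒳^⊥₁` is preenveloping; if moreover `R` is right coherent (every finitely generated
right ideal is finitely presented) and every module in `𝒳` is finitely presented, then
`𝒳^⊥₁` is also covering. -/
theorem rightPerp1_preenveloping_of_pureProjective
    {R : Type u} [Ring R]
    (𝒳 : Set (ModuleCat.{u} Rᵐᵒᵖ)) (h𝒳 : ∀ X ∈ 𝒳, PureProjective X) :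
    (∀ A : ModuleCat.{u} Rᵐᵒᵖ, ∃ (Y : ModuleCat.{u} Rᵐᵒᵖ) (j : A ⟶ Y),
      IsPreenvelope (rightPerp1 𝒳) j) ∧
    ((∀ I : Submodule Rᵐᵒᵖ R, I.FG → Module.FinitePresentation Rᵐᵒᵖ I) →
      (∀ X ∈ 𝒳, Module.FinitePresentation Rᵐᵒᵖ X) →
      ∀ A : ModuleCat.{u} Rᵐᵒᵖ, ∃ (Y : ModuleCat.{u} Rᵐᵒᵖ) (f : Y ⟶ A),
        IsCover (rightPerp1 𝒳) f) := by
  exact ⟨PerpCover.exists_isPreenvelope_rightPerp1 h𝒳, fun hcoh hfp ↦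
    PerpCover.exists_isCover_rightPerp1 (PerpCover.isPseudoCoherent_mulOpposite hcoh) hfp⟩
end
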